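/- arXiv:2105.09565 — 2 statements merged into one kernel-verified Lean document; each statement's English description precedes it below -/
import Mathlib

section
/- Let f be a Rademacher random multiplicative function and let ε > 0 be sufficiently small. For ℓ ≥ 2 define the event D_ℓ := { sup over indices i with X_{ℓ−1} < x_{i−1} ≤ X_ℓ of (1/(√(x_{i−1})·R(x_{i−1}))) · sup_{x_{i−1} < x ≤ x_i} |∑_{x_{i−1} < n ≤ x, P(n) > √x} f(n)| > 2 }. There exists a constant C = C(ε) > 0 such that for all sufficiently large ℓ (in terms of ε), ℙ(D_ℓ) ≤ C · 2^{−(ℓ−1)^K · (1/3 − 68ε/3)/ε}. -/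
open MeasureTheory ProbabilityTheory

noncomputable section

/-- The largest prime factor of `n`, with `P 1 = 1` (and `P 0 = 1`). -/
def Pfac (n : ℕ) : ℕ := if n ≤ 1 then 1 else n.primeFactors.sup id

/-- A Rademacher random multiplicative function. -/
structure IsRademacherRMF {Ω : Type*} [MeasurableSpace Ω] (μ : Measure Ω)
    (f : Ω → ℕ → ℝ) : Prop where
  meas : ∀ n : ℕ, Measurable fun ω => f ω n
  indep : iIndepFun (m := fun _ : Nat.Primes => (inferInstance : MeasurableSpace ℝ))
    (fun (p : Nat.Primes) (ω : Ω) => f ω (p : ℕ)) μ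
  prob_one : ∀ p : ℕ, p.Prime → μ {ω | f ω p = 1} = 1 / 2
  prob_neg_one : ∀ p : ℕ, p.Prime → μ {ω | f ω p = -1} = 1 / 2
  eq_zero_of_not_squarefree : ∀ (ω : Ω) (n : ℕ), ¬Squarefree n → f ω n = 0
  eq_prod_of_squarefree : ∀ (ω : Ω) (n : ℕ), Squarefree n →
    f ω n = ∏ p ∈ n.primeFactors, f ω p

/-- The test points `x_i := ⌊exp(i^ε)⌋`. -/
def testPoint (ε : ℝ) (i : ℕ) : ℕ := ⌊Real.exp ((i : ℝ) ^ ε)⌋₊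

/-- `X_ℓ := exp(2^{ℓ^K})` with `K = 1/(4ε)` (here `ℓ` is a real number). -/
def Xpt (ε ℓ : ℝ) : ℝ := Real.exp ((2 : ℝ) ^ (ℓ ^ (1 / (4 * ε))))

/-- `R(x) := (log log x)^{1/4+ε}`. -/
def Rbd (ε x : ℝ) : ℝ := Real.log (Real.log x) ^ ((1 : ℝ) / 4 + ε)

/-!
Values of a Rademacher random multiplicative function are Walsh monomials in the independent signs
`f p`, so hypercontractivity bounds the fourth moment of a sum of `f n` by the square of the sum of
`3 ^ ω(n)` over its squarefree `n`, and `3 ^ ω(n) = d₃(n)` for these. Since `√x < P(n)` means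
`⌊x⌋ < P(n) ^ 2`, the sum at `x` is the difference of the sums over `n ≤ ⌊x⌋` and over
`max n (P(n) ^ 2) ≤ ⌊x⌋`. As `⌊x⌋` grows both of them only gain terms, so dyadic chaining controls
them uniformly in `x` at the cost of a power of the logarithm. The sum of `d₃` over the short
interval between consecutive test points then bounds the probability that the increment after `x_j`
is large by a constant times `j ^ (11 ε - 2)`, and it remains to sum over those `j` with
`j ^ ε > log X_{ℓ-1}`.
-/

section Hypercontractivity

variable {Ω ι : Type*} {ξ : ι → Ω → ℝ}

/-- The Walsh polynomial `∑_{T ∈ 𝒜} c_T ∏_{i ∈ T} ξ_i`: a multilinear polynomial in the random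
variables `ξ_i` whose monomials are indexed by the finite sets of a family `𝒜`. -/
def walshSum (ξ : ι → Ω → ℝ) (𝒜 : Finset (Finset ι)) (c : Finset ι → ℝ) (ω : Ω) : ℝ :=
  ∑ T ∈ 𝒜, c T * ∏ i ∈ T, ξ i ω

lemma walshSum_powerset_insert [DecidableEq ι] {p : ι} {P : Finset ι} (hp : p ∉ P)
    (c : Finset ι → ℝ) (ω : Ω) :
    walshSum ξ (insert p P).powerset c ω = walshSum ξ P.powerset c ω +
      ξ p ω * walshSum ξ P.powerset (fun T => c (insert p T)) ω := by
  simp only [walshSum]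
  rw [Finset.sum_powerset_insert hp, Finset.mul_sum]
  congr 1
  refine Finset.sum_congr rfl fun T hT => ?_
  rw [Finset.prod_insert (Finset.notMem_mono (Finset.mem_powerset.1 hT) hp)]
  ring

variable [MeasurableSpace Ω] {μ : Measure Ω}

lemma memLp_top_pow {G : Ω → ℝ} (hG : MemLp G ⊤ μ) (n : ℕ) :
    MemLp (fun ω => G ω ^ n) ⊤ μ := by
  simpa using MemLp.prod' (s := Finset.range n) fun _ _ => hG

lemma integrable_pow_mul_pow [IsFiniteMeasure μ] {G H : Ω → ℝ} (hG : MemLp G ⊤ μ)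
    (hH : MemLp H ⊤ μ) (m n : ℕ) : Integrable (fun ω => G ω ^ m * H ω ^ n) μ :=
  ((memLp_top_pow hH n).mul' (memLp_top_pow hG m) (r := ⊤)).integrable le_top

lemma integral_mul_le_of_integral_sq_le {F G : Ω → ℝ} (hF : MemLp F 2 μ) (hG : MemLp G 2 μ)
    (hF0 : 0 ≤ F) (hG0 : 0 ≤ G) {a b : ℝ} (ha : 0 ≤ a) (hb : 0 ≤ b)
    (hFa : ∫ ω, F ω ^ 2 ∂μ ≤ a ^ 2) (hGb : ∫ ω, G ω ^ 2 ∂μ ≤ b ^ 2) :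
    ∫ ω, F ω * G ω ∂μ ≤ a * b := by
  have holder := integral_mul_le_Lp_mul_Lq_of_nonneg (μ := μ) Real.HolderConjugate.two_two
    (.of_forall hF0) (.of_forall hG0) (by simpa using hF) (by simpa using hG)
  simp only [Real.rpow_two, ← Real.sqrt_eq_rpow] at holder
  exact holder.trans (mul_le_mul ((Real.sqrt_le_left ha).2 hFa) ((Real.sqrt_le_left hb).2 hGb)
    (Real.sqrt_nonneg _) ha)

lemma integral_add_mul_pow_four_le [IsProbabilityMeasure μ] {X G H : Ω → ℝ}
    (hX : AEStronglyMeasurable X μ) (hX_sq : ∀ᵐ ω ∂μ, X ω ^ 2 = 1) (hX_mean : ∫ ω, X ω ∂μ = 0)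
    (hG : MemLp G ⊤ μ) (hH : MemLp H ⊤ μ) (hind : IndepFun X (fun ω => (G ω, H ω)) μ)
    {a b : ℝ} (ha : 0 ≤ a) (hb : 0 ≤ b)
    (hGa : ∫ ω, G ω ^ 4 ∂μ ≤ a ^ 2) (hHb : ∫ ω, H ω ^ 4 ∂μ ≤ b ^ 2) :
    ∫ ω, (G ω + X ω * H ω) ^ 4 ∂μ ≤ (a + 3 * b) ^ 2 := by
  let K : ℝ × ℝ → ℝ := fun z => 4 * (z.1 ^ 3 * z.2 ^ 1 + z.1 ^ 1 * z.2 ^ 3)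
  have hXK : IndepFun X (fun ω => K (G ω, H ω)) μ :=
    hind.comp (φ := id) (ψ := K) measurable_id (by fun_prop)
  have hX_int : Integrable X μ := .of_bound hX 1 <| hX_sq.mono fun ω h =>
    (sq_le_one_iff_abs_le_one _).1 h.le
  have hGH := integrable_pow_mul_pow hG hH
  have hK_int : Integrable (fun ω => K (G ω, H ω)) μ := ((hGH 3 1).add (hGH 1 3)).const_mul 4
  have odd_terms : ∫ ω, X ω * K (G ω, H ω) ∂μ = 0 := by
    rw [hXK.integral_fun_mul_eq_mul_integral hX hK_int.aestronglyMeasurable, hX_mean, zero_mul]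
  have cross : ∫ ω, G ω ^ 2 * H ω ^ 2 ∂μ ≤ a * b :=
    integral_mul_le_of_integral_sq_le ((memLp_top_pow hG 2).mono_exponent le_top)
      ((memLp_top_pow hH 2).mono_exponent le_top) (fun _ => sq_nonneg _) (fun _ => sq_nonneg _)
      ha hb (by simpa only [← pow_mul] using hGa) (by simpa only [← pow_mul] using hHb)
  have expansion : (fun ω => (G ω + X ω * H ω) ^ 4) =ᵐ[μ] fun ω =>
      G ω ^ 4 * H ω ^ 0 + 6 * (G ω ^ 2 * H ω ^ 2) + G ω ^ 0 * H ω ^ 4 + X ω * K (G ω, H ω) := by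
    filter_upwards [hX_sq] with ω h
    linear_combination (6 * G ω ^ 2 * H ω ^ 2 + 4 * X ω * G ω * H ω ^ 3 +
      (X ω ^ 2 + 1) * H ω ^ 4) * h
  rw [integral_congr_ae expansion, integral_add, integral_add, integral_add, integral_const_mul,
    odd_terms]
  · simp only [pow_zero, mul_one, one_mul]
    nlinarith [sq_nonneg b]
  · exact hGH 4 0
  · exact (hGH 2 2).const_mul 6
  · exact (hGH 4 0).add ((hGH 2 2).const_mul 6)
  · exact hGH 0 4
  · exact ((hGH 4 0).add ((hGH 2 2).const_mul 6)).add (hGH 0 4)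
  · exact hXK.integrable_mul hX_int hK_int

lemma memLp_top_walshSum [IsFiniteMeasure μ] (hξ : ∀ i, MemLp (ξ i) ⊤ μ)
    (𝒜 : Finset (Finset ι)) (c : Finset ι → ℝ) : MemLp (walshSum ξ 𝒜 c) ⊤ μ :=
  memLp_finsetSum _ fun T _ => MemLp.const_mul
    (by simpa using MemLp.prod' (s := T) fun i _ => hξ i) (c T)

lemma indepFun_walshSum (hξ : ∀ i, Measurable (ξ i)) (hind : iIndepFun ξ μ) {p : ι}
    {P : Finset ι} (hp : p ∉ P) (c d : Finset ι → ℝ) :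
    IndepFun (ξ p) (fun ω => (walshSum ξ P.powerset c ω, walshSum ξ P.powerset d ω)) μ := by
  let σ : ι → MeasurableSpace Ω := fun i => MeasurableSpace.comap (ξ i) inferInstance
  have hσ : Indep (⨆ i ∈ ({p} : Set ι), σ i) (⨆ i ∈ (P : Set ι), σ i) μ :=
    indep_iSup_of_disjoint (fun i => (hξ i).comap_le) hind.iIndep (by simpa using hp)
  have hmeas (e : Finset ι → ℝ) : Measurable[⨆ i ∈ (P : Set ι), σ i] (walshSum ξ P.powerset e) :=
    Finset.measurable_fun_sum _ fun T hT => (Finset.measurable_fun_prod _ fun i hi =>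
      (comap_measurable (ξ i)).mono
        (le_iSup₂ (f := fun i (_ : i ∈ (P : Set ι)) => σ i) i (Finset.mem_powerset.1 hT hi))
        le_rfl).const_mul _
  rw [IndepFun_iff_Indep]
  exact indep_of_indep_of_le hσ (le_iSup₂ (f := fun i (_ : i ∈ ({p} : Set ι)) => σ i) p rfl)
    ((hmeas c).prodMk (hmeas d)).comap_le

variable [IsProbabilityMeasure μ] (hξ : ∀ i, Measurable (ξ i)) (hind : iIndepFun ξ μ)
  (hξ_sq : ∀ i, ∀ᵐ ω ∂μ, ξ i ω ^ 2 = 1) (hξ_mean : ∀ i, ∫ ω, ξ i ω ∂μ = 0)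

include hξ hind hξ_sq hξ_mean

lemma integral_walshSum_powerset_pow_four_le (P : Finset ι) (c : Finset ι → ℝ) :
    ∫ ω, walshSum ξ P.powerset c ω ^ 4 ∂μ ≤ (∑ T ∈ P.powerset, c T ^ 2 * 3 ^ T.card) ^ 2 := by
  classical
  have hξ_top (i : ι) : MemLp (ξ i) ⊤ μ :=
    memLp_top_of_bound (hξ i).aestronglyMeasurable 1 <| (hξ_sq i).mono fun ω h =>
      (sq_le_one_iff_abs_le_one _).1 h.le
  induction P using Finset.induction_on generalizing c with
  | empty => simp [walshSum, ← pow_mul]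
  | insert p P hp ih =>
    have weight_insert : ∑ T ∈ (insert p P).powerset, c T ^ 2 * (3 : ℝ) ^ T.card =
        ∑ T ∈ P.powerset, c T ^ 2 * 3 ^ T.card +
          3 * ∑ T ∈ P.powerset, c (insert p T) ^ 2 * 3 ^ T.card := by
      rw [Finset.sum_powerset_insert hp, Finset.mul_sum]
      congr 1
      refine Finset.sum_congr rfl fun T hT => ?_
      rw [Finset.card_insert_of_notMem (Finset.notMem_mono (Finset.mem_powerset.1 hT) hp)]
      ring
    simp only [walshSum_powerset_insert hp]
    rw [weight_insert]
    exact integral_add_mul_pow_four_le (hξ p).aestronglyMeasurable (hξ_sq p) (hξ_mean p)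
      (memLp_top_walshSum hξ_top _ _) (memLp_top_walshSum hξ_top _ _)
      (indepFun_walshSum hξ hind hp _ _) (Finset.sum_nonneg fun _ _ => by positivity)
      (Finset.sum_nonneg fun _ _ => by positivity) (ih _) (ih _)

/-- The Bonami–Beckner hypercontractive inequality from `L²` to `L⁴`. -/
theorem integral_walshSum_pow_four_le (𝒜 : Finset (Finset ι)) (c : Finset ι → ℝ) :
    ∫ ω, walshSum ξ 𝒜 c ω ^ 4 ∂μ ≤ (∑ T ∈ 𝒜, c T ^ 2 * 3 ^ T.card) ^ 2 := by
  classical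
  have extend_by_zero (g : Finset ι → ℝ) :
      ∑ T ∈ (𝒜.biUnion id).powerset, (if T ∈ 𝒜 then g T else 0) = ∑ T ∈ 𝒜, g T := by
    rw [Finset.sum_ite_mem, Finset.inter_eq_right.2 fun T hT =>
      Finset.mem_powerset.2 (Finset.subset_biUnion_of_mem id hT)]
  have h := integral_walshSum_powerset_pow_four_le hξ hind hξ_sq hξ_mean (𝒜.biUnion id)
    fun T => if T ∈ 𝒜 then c T else 0
  simpa only [walshSum, ite_pow, ne_eq, OfNat.ofNat_ne_zero, not_false_eq_true, zero_pow,
    ite_mul, zero_mul, extend_by_zero] using h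

end Hypercontractivity

/-- The generalized divisor function `d_k(n)`, the number of ordered factorizations of `n` into `k`
factors; the convention for `Nat.finMulAntidiag` gives `d_k(0) = 0`. -/
def divisorCount (k n : ℕ) : ℕ := (Nat.finMulAntidiag k n).card

lemma divisorCount_of_squarefree {n : ℕ} (hn : Squarefree n) (k : ℕ) :
    divisorCount k n = k ^ n.primeFactors.card := by
  rw [divisorCount, Nat.card_finMulAntidiag_of_squarefree hn,
    ArithmeticFunction.cardDistinctFactors_apply, ← List.card_toFinset, Nat.toFinset_factors]

/-- The set of primes dividing `n`, as a finset of `Nat.Primes`: the index set of the Walsh monomial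
equal to `f(n)` when `n` is squarefree. -/
def primeSupport (n : ℕ) : Finset Nat.Primes := n.primeFactors.subtype Nat.Prime

lemma card_primeSupport (n : ℕ) : (primeSupport n).card = n.primeFactors.card :=
  (Finset.card_subtype _ _).trans <| congrArg _ <|
    Finset.filter_true_of_mem fun _ => Nat.prime_of_mem_primeFactors

lemma prod_primeSupport {M : Type*} [CommMonoid M] (g : ℕ → M) (n : ℕ) :
    ∏ p ∈ primeSupport n, g p = ∏ p ∈ n.primeFactors, g p :=
  Finset.prod_subtype_of_mem g fun _ => Nat.prime_of_mem_primeFactors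

lemma injOn_primeSupport : Set.InjOn primeSupport {n | Squarefree n} := by
  have prod_eq {n : ℕ} (hn : Squarefree n) : ∏ p ∈ primeSupport n, (p : ℕ) = n :=
    (prod_primeSupport id n).trans (Nat.prod_primeFactors_of_squarefree hn)
  exact fun a ha b hb hab => by rw [← prod_eq ha, hab, prod_eq hb]

lemma sum_image_primeSupport (A : Finset ℕ) (g : Finset Nat.Primes → ℝ) :
    ∑ T ∈ (A.filter Squarefree).image primeSupport, g T =
      ∑ n ∈ A, if Squarefree n then g (primeSupport n) else 0 := by
  have inj : Set.InjOn primeSupport (A.filter Squarefree) :=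
    injOn_primeSupport.mono fun n hn => (Finset.mem_filter.1 hn).2
  rw [Finset.sum_image inj, Finset.sum_filter]

namespace IsRademacherRMF

variable {Ω : Type*} [MeasurableSpace Ω] {μ : Measure Ω} {f : Ω → ℕ → ℝ}

lemma sum_eq_walshSum (hf : IsRademacherRMF μ f) (A : Finset ℕ) (ω : Ω) :
    ∑ n ∈ A, f ω n = walshSum (fun (p : Nat.Primes) ω => f ω p)
      ((A.filter Squarefree).image primeSupport) (fun _ => 1) ω := by
  rw [walshSum, sum_image_primeSupport]
  refine Finset.sum_congr rfl fun n _ => ?_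
  split_ifs with hn
  · rw [one_mul, prod_primeSupport (f ω), hf.eq_prod_of_squarefree ω n hn]
  · exact hf.eq_zero_of_not_squarefree ω n hn

lemma measurableSet_eq (hf : IsRademacherRMF μ f) (n : ℕ) (c : ℝ) :
    MeasurableSet {ω | f ω n = c} :=
  hf.meas n (measurableSet_singleton c)

variable [IsProbabilityMeasure μ]

lemma ae_eq_one_or_eq_neg_one (hf : IsRademacherRMF μ f) {p : ℕ} (hp : p.Prime) :
    ∀ᵐ ω ∂μ, f ω p = 1 ∨ f ω p = -1 := by
  have disj : Disjoint {ω | f ω p = 1} {ω | f ω p = -1} :=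
    Set.disjoint_left.2 fun ω (h : f ω p = 1) (h' : f ω p = -1) => by linarith
  have full : μ ({ω | f ω p = 1} ∪ {ω | f ω p = -1}) = 1 := by
    rw [measure_union disj (hf.measurableSet_eq p _), hf.prob_one p hp, hf.prob_neg_one p hp,
      ENNReal.add_halves]
  exact (prob_compl_eq_zero_iff
    ((hf.measurableSet_eq p _).union (hf.measurableSet_eq p _))).2 full

lemma integral_prime (hf : IsRademacherRMF μ f) {p : ℕ} (hp : p.Prime) :
    ∫ ω, f ω p ∂μ = 0 := by
  have eq_indicators : (fun ω => f ω p) =ᵐ[μ] fun ω =>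
      {ω | f ω p = 1}.indicator 1 ω - {ω | f ω p = -1}.indicator 1 ω := by
    filter_upwards [hf.ae_eq_one_or_eq_neg_one hp] with ω h
    rcases h with h | h <;> norm_num [Set.indicator, h]
  rw [integral_congr_ae eq_indicators, integral_sub
      ((integrable_const 1).indicator (hf.measurableSet_eq p _))
      ((integrable_const 1).indicator (hf.measurableSet_eq p _)),
    integral_indicator_one (hf.measurableSet_eq p _),
    integral_indicator_one (hf.measurableSet_eq p _), Measure.real, Measure.real,
    hf.prob_one p hp, hf.prob_neg_one p hp, sub_self]

lemma memLp_top_sum (hf : IsRademacherRMF μ f) (A : Finset ℕ) :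
    MemLp (fun ω => ∑ n ∈ A, f ω n) ⊤ μ := by
  have memLp_prime (p : Nat.Primes) : MemLp (fun ω => f ω p) ⊤ μ :=
    memLp_top_of_bound (hf.meas p).aestronglyMeasurable 1 <|
      (hf.ae_eq_one_or_eq_neg_one p.2).mono fun ω h => by rcases h with h | h <;> simp [h]
  simpa only [hf.sum_eq_walshSum] using memLp_top_walshSum memLp_prime _ _

theorem integral_sum_pow_four_le (hf : IsRademacherRMF μ f) (A : Finset ℕ) :
    ∫ ω, (∑ n ∈ A, f ω n) ^ 4 ∂μ ≤ (∑ n ∈ A, (divisorCount 3 n : ℝ)) ^ 2 := by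
  have bonami := integral_walshSum_pow_four_le (μ := μ) (ξ := fun (p : Nat.Primes) ω => f ω p)
    (fun p => hf.meas p) hf.indep
    (fun p => (hf.ae_eq_one_or_eq_neg_one p.2).mono fun ω h => sq_eq_one_iff.2 h)
    (fun p => hf.integral_prime p.2) ((A.filter Squarefree).image primeSupport) fun _ => 1
  simp only [← hf.sum_eq_walshSum, one_pow, one_mul, sum_image_primeSupport,
    card_primeSupport] at bonami
  refine bonami.trans (pow_le_pow_left₀ (Finset.sum_nonneg fun n _ => by positivity)
    (Finset.sum_le_sum fun n _ => ?_) 2)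
  split_ifs with hn
  · simp [divisorCount_of_squarefree hn]
  · positivity

theorem measure_lt_abs_sum_le (hf : IsRademacherRMF μ f) (A : Finset ℕ) {η : ℝ} (hη : 0 < η) :
    μ {ω | η < |∑ n ∈ A, f ω n|} ≤
      ENNReal.ofReal ((∑ n ∈ A, (divisorCount 3 n : ℝ)) ^ 2 / η ^ 4) := by
  have markov := mul_meas_ge_le_integral_of_nonneg (μ := μ) (f := fun ω => (∑ n ∈ A, f ω n) ^ 4)
    (.of_forall fun ω => by positivity)
    ((memLp_top_pow (hf.memLp_top_sum A) 4).integrable le_top) (η ^ 4)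
  have subset : {ω | η < |∑ n ∈ A, f ω n|} ⊆ {ω | η ^ 4 ≤ (∑ n ∈ A, f ω n) ^ 4} :=
    fun ω (hω : η < _) => by
      simpa only [Set.mem_ofPred_eq, (by decide : Even 4).pow_abs] using
        pow_le_pow_left₀ hη.le hω.le 4
  refine (measure_mono subset).trans ?_
  rw [← ofReal_measureReal]
  refine ENNReal.ofReal_le_ofReal ?_
  rw [le_div_iff₀' (by positivity)]
  exact markov.trans (hf.integral_sum_pow_four_le A)

end IsRademacherRMF

section MaximalInequality

lemma abs_sub_le_of_dyadic_increments {η : ℝ} {r : ℕ} {F : ℕ → ℝ}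
    (hF : ∀ t ≤ r, ∀ m < 2 ^ (r - t), |F ((m + 1) * 2 ^ t) - F (m * 2 ^ t)| ≤ η)
    {k : ℕ} (hk : k ≤ 2 ^ r) : |F k - F 0| ≤ (r + 1) * η := by
  have hη : 0 ≤ η := (abs_nonneg _).trans (hF 0 (Nat.zero_le r) 0 (by positivity))
  induction r generalizing F k with
  | zero =>
    obtain rfl | rfl : k = 0 ∨ k = 1 := by rw [pow_zero] at hk; lia
    · simpa using hη
    · simpa using hF 0 le_rfl 0 one_pos
  | succ r ih =>
    have coarse : |F (2 * (k / 2)) - F 0| ≤ (r + 1) * η := by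
      refine ih (F := fun k => F (2 * k)) (fun t ht m hm => ?_) (by rw [pow_succ] at hk; lia)
      have scale (a : ℕ) : 2 * (a * 2 ^ t) = a * 2 ^ (t + 1) := by ring
      simpa only [scale] using hF (t + 1) (by lia) m (by simpa using hm)
    have last_step : |F k - F (2 * (k / 2))| ≤ η := by
      obtain ⟨a, rfl | rfl⟩ := Nat.even_or_odd' k
      · simpa using hη
      · have half : (2 * a + 1) / 2 = a := by lia
        simpa [half] using hF 0 (Nat.zero_le _) (2 * a) (by simpa using hk)
    push_cast
    linarith [abs_sub_le (F k) (F (2 * (k / 2))) (F 0)]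

variable {ι Ω : Type*} (N : Finset ι) (τ : ι → ℕ)

/-- The indices in `N` whose label under `τ` lies in the dyadic interval `(m 2^t, (m + 1) 2^t]`. -/
def dyadicBlock (t m : ℕ) : Finset ι := {n ∈ N | τ n ∈ Set.Ioc (m * 2 ^ t) ((m + 1) * 2 ^ t)}

lemma sum_filter_le_sub_sum_filter_le (x : ι → ℝ) (t m : ℕ) :
    ∑ n ∈ N with τ n ≤ (m + 1) * 2 ^ t, x n - ∑ n ∈ N with τ n ≤ m * 2 ^ t, x n =
      ∑ n ∈ dyadicBlock N τ t m, x n := by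
  have endpoints_le : m * 2 ^ t ≤ (m + 1) * 2 ^ t := Nat.mul_le_mul_right _ m.le_succ
  simp only [dyadicBlock, Finset.sum_filter, ← Finset.sum_sub_distrib, Set.mem_Ioc]
  refine Finset.sum_congr rfl fun n _ => ?_
  by_cases hlow : τ n ≤ m * 2 ^ t
  · simp [hlow, hlow.trans endpoints_le]
  · simp [hlow, not_le.1 hlow]

lemma sum_sq_sum_dyadicBlock_le {w : ι → ℝ} (hw : ∀ n ∈ N, 0 ≤ w n) (t : ℕ) (I : Finset ℕ) :
    ∑ m ∈ I, (∑ n ∈ dyadicBlock N τ t m, w n) ^ 2 ≤ (∑ n ∈ N, w n) ^ 2 := by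
  classical
  have block_subset (m : ℕ) : dyadicBlock N τ t m ⊆ N := Finset.filter_subset _ _
  have block_nonneg (m : ℕ) : 0 ≤ ∑ n ∈ dyadicBlock N τ t m, w n :=
    Finset.sum_nonneg fun n hn => hw n (block_subset m hn)
  have blocks_disjoint : (I : Set ℕ).PairwiseDisjoint (dyadicBlock N τ t) := by
    intro m _ m' _ hne
    have endpoints_mono : Monotone fun m : ℕ => m * 2 ^ t := fun _ _ h => Nat.mul_le_mul_right _ h
    exact Finset.disjoint_filter.2 fun n _ h h' =>
      Set.disjoint_left.1 (endpoints_mono.pairwise_disjoint_on_Ioc_succ hne) h h'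
  calc ∑ m ∈ I, (∑ n ∈ dyadicBlock N τ t m, w n) ^ 2
      ≤ (∑ m ∈ I, ∑ n ∈ dyadicBlock N τ t m, w n) ^ 2 :=
        Finset.sum_sq_le_sq_sum_of_nonneg fun m _ => block_nonneg m
    _ = (∑ n ∈ I.biUnion (dyadicBlock N τ t), w n) ^ 2 := by
        rw [Finset.sum_biUnion blocks_disjoint]
    _ ≤ (∑ n ∈ N, w n) ^ 2 := by
        refine pow_le_pow_left₀ ?_ (Finset.sum_le_sum_of_subset_of_nonneg
          (Finset.biUnion_subset.2 fun m _ => block_subset m) fun n hn _ => hw n hn) 2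
        rw [Finset.sum_biUnion blocks_disjoint]
        exact Finset.sum_nonneg fun m _ => block_nonneg m

variable {N τ}

lemma exists_dyadicBlock_lt_abs_sum (hτ : ∀ n ∈ N, 0 < τ n) {x : ι → ℝ} {η : ℝ} {r k : ℕ}
    (hk : k ≤ 2 ^ r) (hlt : (r + 1) * η < |∑ n ∈ N with τ n ≤ k, x n|) :
    ∃ t ≤ r, ∃ m < 2 ^ (r - t), η < |∑ n ∈ dyadicBlock N τ t m, x n| := by
  by_contra! hle
  have chain := abs_sub_le_of_dyadic_increments (F := fun k => ∑ n ∈ N with τ n ≤ k, x n)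
    (fun t ht m hm => by rw [sum_filter_le_sub_sum_filter_le]; exact hle t ht m hm) hk
  have start : ∑ n ∈ N with τ n ≤ 0, x n = 0 := by
    rw [Finset.filter_false_of_mem fun n hn => (hτ n hn).not_ge, Finset.sum_empty]
  rw [start, sub_zero] at chain
  exact hlt.not_ge chain

theorem measure_exists_lt_abs_sum_filter_le [MeasurableSpace Ω] {μ : Measure Ω}
    {X : ι → Ω → ℝ} {w : ι → ℝ} (hw : ∀ n ∈ N, 0 ≤ w n) {p : ℕ}
    (tail : ∀ A ⊆ N, ∀ η > 0,
      μ {ω | η < |∑ n ∈ A, X n ω|} ≤ ENNReal.ofReal ((∑ n ∈ A, w n) ^ 2 / η ^ p))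
    (hτ : ∀ n ∈ N, 0 < τ n) (r : ℕ) {η : ℝ} (hη : 0 < η) :
    μ {ω | ∃ k ≤ 2 ^ r, η < |∑ n ∈ N with τ n ≤ k, X n ω|} ≤
      ENNReal.ofReal ((r + 1) ^ (p + 1) * (∑ n ∈ N, w n) ^ 2 / η ^ p) := by
  let S : Finset (Σ _ : ℕ, ℕ) := (Finset.range (r + 1)).sigma fun t => Finset.range (2 ^ (r - t))
  let W : (Σ _ : ℕ, ℕ) → ℝ := fun s => ∑ n ∈ dyadicBlock N τ s.1 s.2, w n
  have hη' : 0 < η / (r + 1) := by positivity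
  calc μ {ω | ∃ k ≤ 2 ^ r, η < |∑ n ∈ N with τ n ≤ k, X n ω|}
      ≤ μ (⋃ s ∈ S, {ω | η / (r + 1) < |∑ n ∈ dyadicBlock N τ s.1 s.2, X n ω|}) := by
        refine measure_mono fun ω ⟨k, hk, hlt⟩ => ?_
        rw [← mul_div_cancel₀ η (by positivity : (r + 1 : ℝ) ≠ 0)] at hlt
        obtain ⟨t, ht, m, hm, hblock⟩ := exists_dyadicBlock_lt_abs_sum hτ hk hlt
        have mem_S : ⟨t, m⟩ ∈ S :=
          Finset.mem_sigma.2 ⟨Finset.mem_range.2 (Nat.lt_succ_of_le ht), Finset.mem_range.2 hm⟩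
        exact Set.mem_iUnion₂.2 ⟨⟨t, m⟩, mem_S, hblock⟩
    _ ≤ ∑ s ∈ S, ENNReal.ofReal (W s ^ 2 / (η / (r + 1)) ^ p) :=
        (measure_biUnion_finset_le _ _).trans
          (Finset.sum_le_sum fun s _ => tail _ (Finset.filter_subset _ _) _ hη')
    _ = ENNReal.ofReal (∑ s ∈ S, W s ^ 2 / (η / (r + 1)) ^ p) :=
        (ENNReal.ofReal_sum_of_nonneg fun s _ => by positivity).symm
    _ ≤ ENNReal.ofReal (∑ _t ∈ Finset.range (r + 1), (∑ n ∈ N, w n) ^ 2 / (η / (r + 1)) ^ p) := by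
        rw [Finset.sum_sigma]
        simp only [← Finset.sum_div]
        gcongr with t
        exact sum_sq_sum_dyadicBlock_le N τ hw t _
    _ = ENNReal.ofReal ((r + 1) ^ (p + 1) * (∑ n ∈ N, w n) ^ 2 / η ^ p) := by
        rw [Finset.sum_const, Finset.card_range, nsmul_eq_mul, div_pow]
        congr 1
        push_cast
        field_simp
        ring

end MaximalInequality

section DivisorSums

lemma card_filter_dvd_Ioc_le {u v d : ℕ} (huv : u ≤ v) (hd : 0 < d) :
    (((Finset.Ioc u v).filter (d ∣ ·)).card : ℝ) ≤ ((v : ℝ) - u) / d + 1 := by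
  have card_eq : (((Finset.Ioc u v).filter (d ∣ ·)).card : ℤ) =
      max (⌊(v : ℚ) / d⌋ - ⌊(u : ℚ) / d⌋) 0 := by
    simpa [Nat.modEq_zero_iff_dvd] using Nat.Ioc_filter_modEq_card u v hd 0
  have card_le : (((Finset.Ioc u v).filter (d ∣ ·)).card : ℚ) ≤ ((v : ℚ) - u) / d + 1 := by
    have div_le_div : (u : ℚ) / d ≤ v / d := by gcongr
    rw [← Int.cast_natCast, card_eq, Int.cast_max, Int.cast_sub, Int.cast_zero, sub_div]
    exact max_le (by linarith [Int.floor_le ((v : ℚ) / d), Int.sub_one_lt_floor ((u : ℚ) / d)])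
      (by linarith)
  simpa using (Rat.cast_le (K := ℝ)).2 card_le

/-- The `k`-tuples that can remain when the largest of `k + 1` factors of a number `n ≤ v` is
deleted: the remaining product is then at most `n ^ (k / (k + 1))`. -/
def smallTuples (k v : ℕ) : Finset (Fin k → ℕ) :=
  {t ∈ Fintype.piFinset fun _ => Finset.Icc 1 v | (∏ j, t j) ^ (k + 1) ≤ v ^ k}

lemma prod_pos_of_mem_smallTuples {k v : ℕ} {t : Fin k → ℕ} (ht : t ∈ smallTuples k v) :
    0 < ∏ j, t j :=
  Finset.prod_pos fun j _ =>
    (Finset.mem_Icc.1 (Fintype.mem_piFinset.1 (Finset.mem_filter.1 ht).1 j)).1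

lemma prod_le_rpow_of_mem_smallTuples {k v : ℕ} {t : Fin k → ℕ} (ht : t ∈ smallTuples k v) :
    ((∏ j, t j : ℕ) : ℝ) ≤ (v : ℝ) ^ ((k : ℝ) / (k + 1)) := by
  have hpow : ((∏ j, t j : ℕ) : ℝ) ^ (k + 1) ≤ (v : ℝ) ^ k :=
    mod_cast (Finset.mem_filter.1 ht).2
  refine le_of_pow_le_pow_left₀ k.succ_ne_zero (by positivity) (hpow.trans_eq ?_)
  rw [← Real.rpow_mul_natCast (by positivity), Nat.cast_succ, div_mul_cancel₀ _ (by positivity),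
    Real.rpow_natCast]

lemma removeNth_mem_smallTuples {k n v : ℕ} (hnv : n ≤ v) {t : Fin (k + 1) → ℕ}
    (ht : t ∈ Nat.finMulAntidiag (k + 1) n) {i : Fin (k + 1)} (hi : n ≤ t i ^ (k + 1)) :
    i.removeNth t ∈ {s ∈ smallTuples k v | ∏ j, s j ∣ n} := by
  obtain ⟨hprod, hn⟩ := Nat.mem_finMulAntidiag.1 ht
  rw [Fin.prod_univ_succAbove t i] at hprod
  have factor_mem (j : Fin (k + 1)) : t j ∈ Finset.Icc 1 v :=
    Finset.mem_Icc.2 ⟨Nat.pos_of_ne_zero (Nat.ne_zero_of_mem_finMulAntidiag ht j),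
      (Nat.le_of_dvd (Nat.pos_of_ne_zero hn) (Nat.dvd_of_mem_finMulAntidiag ht j)).trans hnv⟩
  set q := ∏ j, t (i.succAbove j)
  have hq : q ^ (k + 1) * n ≤ n ^ k * n :=
    calc q ^ (k + 1) * n ≤ q ^ (k + 1) * t i ^ (k + 1) := Nat.mul_le_mul_left _ hi
      _ = n ^ k * n := by rw [← mul_pow, mul_comm q, hprod, pow_succ]
  exact Finset.mem_filter.2 ⟨Finset.mem_filter.2 ⟨Fintype.mem_piFinset.2 fun j => factor_mem _,
    (Nat.le_of_mul_le_mul_right hq (Nat.pos_of_ne_zero hn)).trans (Nat.pow_le_pow_left hnv k)⟩,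
    Dvd.intro_left _ hprod⟩

lemma injOn_removeNth_finMulAntidiag {k n : ℕ} (i : Fin (k + 1)) :
    Set.InjOn i.removeNth (Nat.finMulAntidiag (k + 1) n : Set (Fin (k + 1) → ℕ)) := by
  intro t ht s hs hts
  obtain ⟨ht_prod, hn⟩ := Nat.mem_finMulAntidiag.1 ht
  have hs_prod := Nat.prod_eq_of_mem_finMulAntidiag hs
  rw [Fin.prod_univ_succAbove _ i] at ht_prod hs_prod
  have rest_eq : ∏ j, t (i.succAbove j) = ∏ j, s (i.succAbove j) :=
    Finset.prod_congr rfl fun j _ => congrFun hts j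
  have rest_ne_zero : ∏ j, s (i.succAbove j) ≠ 0 := right_ne_zero_of_mul (hs_prod ▸ hn)
  have hi : t i = s i := mul_right_cancel₀ rest_ne_zero <| by rw [hs_prod, ← rest_eq, ht_prod]
  rw [← Fin.insertNth_self_removeNth i t, hts, hi, Fin.insertNth_self_removeNth]

lemma exists_le_pow_of_mem_finMulAntidiag {k n : ℕ} {t : Fin (k + 1) → ℕ}
    (ht : t ∈ Nat.finMulAntidiag (k + 1) n) : ∃ i, n ≤ t i ^ (k + 1) := by
  by_contra! hlt
  have := Finset.prod_lt_prod_of_nonempty (s := Finset.univ) (f := fun i => t i ^ (k + 1))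
    (fun i _ => Nat.pow_pos (Nat.pos_of_ne_zero (Nat.ne_zero_of_mem_finMulAntidiag ht i)))
    (fun i _ => hlt i) Finset.univ_nonempty
  rw [Finset.prod_pow, Nat.prod_eq_of_mem_finMulAntidiag ht, Finset.prod_const,
    Finset.card_fin] at this
  exact this.false

lemma divisorCount_succ_le {n v : ℕ} (hnv : n ≤ v) (k : ℕ) :
    divisorCount (k + 1) n ≤ (k + 1) * {t ∈ smallTuples k v | ∏ j, t j ∣ n}.card := by
  let withLargest (i : Fin (k + 1)) := {t ∈ Nat.finMulAntidiag (k + 1) n | n ≤ t i ^ (k + 1)}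
  have cover : Nat.finMulAntidiag (k + 1) n ⊆ Finset.univ.biUnion withLargest := fun t ht =>
    have ⟨i, hi⟩ := exists_le_pow_of_mem_finMulAntidiag ht
    Finset.mem_biUnion.2 ⟨i, Finset.mem_univ i, Finset.mem_filter.2 ⟨ht, hi⟩⟩
  have card_withLargest_le (i : Fin (k + 1)) :
      (withLargest i).card ≤ {t ∈ smallTuples k v | ∏ j, t j ∣ n}.card :=
    Finset.card_le_card_of_injOn i.removeNth
      (fun t ht => have ⟨ht_mem, hi⟩ := Finset.mem_filter.1 ht
        removeNth_mem_smallTuples hnv ht_mem hi)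
      ((injOn_removeNth_finMulAntidiag i).mono fun t ht => (Finset.mem_filter.1 ht).1)
  simpa [divisorCount] using (Finset.card_le_card cover).trans
    (Finset.card_biUnion_le_card_mul _ _ _ fun i _ => card_withLargest_le i)

lemma sum_inv_prod_smallTuples_le (k v : ℕ) :
    ∑ t ∈ smallTuples k v, ((∏ j, t j : ℕ) : ℝ)⁻¹ ≤ (1 + Real.log v) ^ k := by
  have harmonic_sum : ∑ a ∈ Finset.Icc 1 v, (a : ℝ)⁻¹ ≤ 1 + Real.log v := by
    simpa [harmonic_eq_sum_Icc] using harmonic_le_one_add_log v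
  calc ∑ t ∈ smallTuples k v, ((∏ j, t j : ℕ) : ℝ)⁻¹
      ≤ ∑ t ∈ Fintype.piFinset fun _ : Fin k => Finset.Icc 1 v, ∏ j, (t j : ℝ)⁻¹ := by
        simp only [Nat.cast_prod, ← Finset.prod_inv_distrib]
        exact Finset.sum_le_sum_of_subset_of_nonneg (Finset.filter_subset _ _)
          fun t _ _ => by positivity
    _ = (∑ a ∈ Finset.Icc 1 v, (a : ℝ)⁻¹) ^ k := by
        rw [Finset.sum_prod_piFinset _ fun _ (a : ℕ) => (a : ℝ)⁻¹, Finset.prod_const,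
          Finset.card_fin]
    _ ≤ (1 + Real.log v) ^ k := by gcongr

theorem sum_divisorCount_Ioc_le {u v : ℕ} (huv : u ≤ v) (k : ℕ) :
    ∑ n ∈ Finset.Ioc u v, (divisorCount (k + 1) n : ℝ) ≤
      (k + 1) * (v - u + (v : ℝ) ^ ((k : ℝ) / (k + 1))) * (1 + Real.log v) ^ k := by
  set E : ℝ := v - u + (v : ℝ) ^ ((k : ℝ) / (k + 1))
  have hE : 0 ≤ E := add_nonneg (sub_nonneg.2 (mod_cast huv)) (by positivity)
  have multiples_le {t : Fin k → ℕ} (ht : t ∈ smallTuples k v) :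
      (((Finset.Ioc u v).filter (∏ j, t j ∣ ·)).card : ℝ) ≤ E * ((∏ j, t j : ℕ) : ℝ)⁻¹ := by
    have hpos := prod_pos_of_mem_smallTuples ht
    refine (card_filter_dvd_Ioc_le huv hpos).trans ?_
    rw [← div_eq_mul_inv, add_div]
    gcongr
    rw [one_le_div (mod_cast hpos)]
    exact prod_le_rpow_of_mem_smallTuples ht
  calc ∑ n ∈ Finset.Ioc u v, (divisorCount (k + 1) n : ℝ)
      ≤ ∑ n ∈ Finset.Ioc u v, (k + 1) * ({t ∈ smallTuples k v | ∏ j, t j ∣ n}.card : ℝ) :=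
        Finset.sum_le_sum fun n hn => mod_cast divisorCount_succ_le (Finset.mem_Ioc.1 hn).2 k
    _ = (k + 1) *
          ∑ t ∈ smallTuples k v, (((Finset.Ioc u v).filter (∏ j, t j ∣ ·)).card : ℝ) := by
        rw [← Finset.mul_sum]
        congr 1
        exact_mod_cast Finset.sum_card_bipartiteAbove_eq_sum_card_bipartiteBelow _
    _ ≤ (k + 1) * ∑ t ∈ smallTuples k v, E * ((∏ j, t j : ℕ) : ℝ)⁻¹ := by
        gcongr with t ht
        exact multiples_le ht
    _ ≤ (k + 1) * E * (1 + Real.log v) ^ k := by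
        rw [← Finset.mul_sum, mul_assoc]
        gcongr
        exact sum_inv_prod_smallTuples_le k v

end DivisorSums

section BlockSums

variable {Ω : Type*} [MeasurableSpace Ω] {μ : Measure Ω} [IsProbabilityMeasure μ]
  {f : Ω → ℕ → ℝ}

lemma sum_filter_sqrt_lt_eq (a : ℕ → ℝ) (g : ℕ → ℕ) {u v : ℕ} {x : ℝ} (hx₀ : 0 ≤ x)
    (hxv : x ≤ v) :
    ∑ n ∈ Finset.Ioc u ⌊x⌋₊ with √x < g n, a n =
      (∑ n ∈ Finset.Ioc u v with n ≤ ⌊x⌋₊, a n) -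
        ∑ n ∈ Finset.Ioc u v with max n (g n ^ 2) ≤ ⌊x⌋₊, a n := by
  have floor_le : ⌊x⌋₊ ≤ v := Nat.floor_le_of_le hxv
  have Ioc_eq : Finset.Ioc u ⌊x⌋₊ = {n ∈ Finset.Ioc u v | n ≤ ⌊x⌋₊} := by
    ext n
    simp only [Finset.mem_Ioc, Finset.mem_filter]
    omega
  have sqrt_lt_iff (n : ℕ) : √x < g n ↔ ¬ g n ^ 2 ≤ ⌊x⌋₊ := by
    rw [Nat.le_floor_iff hx₀, Nat.cast_pow, ← Real.le_sqrt (by positivity) hx₀, not_le]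
  simp only [Ioc_eq, Finset.filter_filter, Finset.sum_filter, ← Finset.sum_sub_distrib, sqrt_lt_iff,
    max_le_iff]
  refine Finset.sum_congr rfl fun n _ => ?_
  by_cases n ≤ ⌊x⌋₊ <;> by_cases g n ^ 2 ≤ ⌊x⌋₊ <;> simp [*]

theorem IsRademacherRMF.measure_exists_lt_abs_sum_sqrt_lt_le (hf : IsRademacherRMF μ f)
    (g : ℕ → ℕ) {u v r : ℕ} (hv : v ≤ 2 ^ r) {η : ℝ} (hη : 0 < η) :
    μ {ω | ∃ x : ℝ, u < x ∧ x ≤ v ∧ η < |∑ n ∈ Finset.Ioc u ⌊x⌋₊ with √x < g n, f ω n|} ≤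
      ENNReal.ofReal (2 * ((r + 1) ^ 5 *
        (∑ n ∈ Finset.Ioc u v, (divisorCount 3 n : ℝ)) ^ 2 / (η / 2) ^ 4)) := by
  set bound : ℝ := (r + 1) ^ 5 * (∑ n ∈ Finset.Ioc u v, (divisorCount 3 n : ℝ)) ^ 2 / (η / 2) ^ 4
  let deviation (τ : ℕ → ℕ) : Set Ω :=
    {ω | ∃ k ≤ 2 ^ r, η / 2 < |∑ n ∈ Finset.Ioc u v with τ n ≤ k, f ω n|}
  have measure_deviation_le (τ : ℕ → ℕ) (hτ : ∀ n, n ≤ τ n) :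
      μ (deviation τ) ≤ ENNReal.ofReal bound :=
    measure_exists_lt_abs_sum_filter_le (fun _ _ => by positivity)
      (fun A _ _ hη => hf.measure_lt_abs_sum_le A hη)
      (fun n hn => (Nat.zero_le u).trans_lt ((Finset.mem_Ioc.1 hn).1.trans_le (hτ n))) r
      (half_pos hη)
  have cover : {ω | ∃ x : ℝ, u < x ∧ x ≤ v ∧
      η < |∑ n ∈ Finset.Ioc u ⌊x⌋₊ with √x < g n, f ω n|} ⊆
        deviation id ∪ deviation fun n => max n (g n ^ 2) := by
    rintro ω ⟨x, hux, hxv, hlt⟩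
    rw [sum_filter_sqrt_lt_eq _ _ ((Nat.cast_nonneg u).trans hux.le) hxv] at hlt
    have floor_le : ⌊x⌋₊ ≤ 2 ^ r := (Nat.floor_le_of_le hxv).trans hv
    by_contra hω
    simp only [deviation, Set.mem_union, Set.mem_ofPred_eq, id, not_or, not_exists, not_and,
      not_lt] at hω
    linarith [abs_sub (∑ n ∈ Finset.Ioc u v with n ≤ ⌊x⌋₊, f ω n)
      (∑ n ∈ Finset.Ioc u v with max n (g n ^ 2) ≤ ⌊x⌋₊, f ω n),
      hω.1 _ floor_le, hω.2 _ floor_le]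
  have bound_nonneg : 0 ≤ bound := by positivity
  calc _ ≤ μ (deviation id) + μ (deviation fun n => max n (g n ^ 2)) :=
        (measure_mono cover).trans (measure_union_le _ _)
    _ ≤ ENNReal.ofReal bound + ENNReal.ofReal bound := by
        gcongr
        · exact measure_deviation_le _ fun _ => le_rfl
        · exact measure_deviation_le _ fun _ => le_max_left _ _
    _ = ENNReal.ofReal (2 * bound) := by
        rw [← ENNReal.ofReal_add bound_nonneg bound_nonneg, two_mul]

end BlockSums

section TestPoints

open Filter Asymptotics

variable {ε : ℝ}

lemma tendsto_natCast_rpow_atTop (hε : 0 < ε) :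
    Tendsto (fun j : ℕ => (j : ℝ) ^ ε) atTop atTop :=
  (tendsto_rpow_atTop hε).comp tendsto_natCast_atTop_atTop

lemma monotone_testPoint (hε : 0 < ε) : Monotone (testPoint ε) := fun _ _ hij =>
  Nat.floor_mono (Real.exp_le_exp.2 (Real.rpow_le_rpow (by positivity) (mod_cast hij) hε.le))

lemma testPoint_le_exp (ε : ℝ) (j : ℕ) : (testPoint ε j : ℝ) ≤ Real.exp ((j : ℝ) ^ ε) :=
  Nat.floor_le (Real.exp_nonneg _)

lemma one_le_testPoint (ε : ℝ) (j : ℕ) : 1 ≤ testPoint ε j :=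
  Nat.le_floor (by simpa using Real.rpow_nonneg j.cast_nonneg ε)

lemma isEquivalent_testPoint (hε : 0 < ε) :
    (fun j => (testPoint ε j : ℝ)) ~[atTop] fun j => Real.exp ((j : ℝ) ^ ε) :=
  isEquivalent_nat_floor.comp_tendsto (Real.tendsto_exp_atTop.comp (tendsto_natCast_rpow_atTop hε))

lemma succ_rpow_le_rpow_add (hε₀ : 0 ≤ ε) (hε₁ : ε ≤ 1) {j : ℕ} (hj : 0 < j) :
    ((j + 1 : ℕ) : ℝ) ^ ε ≤ (j : ℝ) ^ ε + (j : ℝ) ^ (ε - 1) := by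
  have hj' : (0 : ℝ) < j := mod_cast hj
  calc ((j + 1 : ℕ) : ℝ) ^ ε = (j : ℝ) ^ ε * (1 + 1 / j) ^ ε := by
        rw [← Real.mul_rpow hj'.le (by positivity)]
        congr 1
        push_cast
        field_simp
    _ ≤ (j : ℝ) ^ ε * (1 + ε * (1 / j)) := by
        gcongr
        exact rpow_one_add_le_one_add_mul_self (by linarith [show 0 ≤ 1 / (j : ℝ) by positivity])
          hε₀ hε₁
    _ ≤ (j : ℝ) ^ ε * (1 + 1 * (1 / j)) := by gcongr
    _ = (j : ℝ) ^ ε + (j : ℝ) ^ (ε - 1) := by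
        rw [Real.rpow_sub_one hj'.ne']
        ring

lemma eventually_succ_rpow_le_rpow_add_one (hε₀ : 0 ≤ ε) (hε₁ : ε ≤ 1) :
    ∀ᶠ j : ℕ in atTop, ((j + 1 : ℕ) : ℝ) ^ ε ≤ (j : ℝ) ^ ε + 1 := by
  filter_upwards [eventually_gt_atTop 0] with j hj
  refine (succ_rpow_le_rpow_add hε₀ hε₁ hj).trans ?_
  gcongr
  exact Real.rpow_le_one_of_one_le_of_nonpos (mod_cast hj) (by linarith)

lemma isBigO_exp_succ_rpow_sub (hε₀ : 0 ≤ ε) (hε₁ : ε < 1) :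
    (fun j : ℕ => Real.exp (((j + 1 : ℕ) : ℝ) ^ ε) - Real.exp ((j : ℝ) ^ ε)) =O[atTop]
      fun j => (j : ℝ) ^ (ε - 1) * Real.exp ((j : ℝ) ^ ε) := by
  refine .of_bound 2 ?_
  filter_upwards [eventually_gt_atTop 0] with j hj
  set δ : ℝ := (j : ℝ) ^ (ε - 1)
  have hδ₀ : 0 ≤ δ := by positivity
  have hδ₁ : δ ≤ 1 := Real.rpow_le_one_of_one_le_of_nonpos (mod_cast hj) (by linarith)
  have exp_sub_one_le : Real.exp δ - 1 ≤ 2 * δ := by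
    simpa [abs_of_nonneg hδ₀] using
      (le_abs_self _).trans (Real.abs_exp_sub_one_le (abs_le.2 ⟨by linarith, hδ₁⟩))
  have exp_mono : Real.exp ((j : ℝ) ^ ε) ≤ Real.exp (((j + 1 : ℕ) : ℝ) ^ ε) := by
    gcongr
    omega
  rw [Real.norm_of_nonneg (sub_nonneg.2 exp_mono), Real.norm_of_nonneg (by positivity)]
  calc Real.exp (((j + 1 : ℕ) : ℝ) ^ ε) - Real.exp ((j : ℝ) ^ ε)
      ≤ Real.exp ((j : ℝ) ^ ε + δ) - Real.exp ((j : ℝ) ^ ε) := by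
        gcongr
        exact succ_rpow_le_rpow_add hε₀ hε₁.le hj
    _ = (Real.exp δ - 1) * Real.exp ((j : ℝ) ^ ε) := by rw [Real.exp_add]; ring
    _ ≤ 2 * δ * Real.exp ((j : ℝ) ^ ε) := by gcongr
    _ = 2 * (δ * Real.exp ((j : ℝ) ^ ε)) := mul_assoc _ _ _

lemma isLittleO_exp_mul_rpow (hε : 0 < ε) {c : ℝ} (hc : c < 1) (b : ℝ) :
    (fun j : ℕ => Real.exp (c * (j : ℝ) ^ ε)) =o[atTop]
      fun j => (j : ℝ) ^ b * Real.exp ((j : ℝ) ^ ε) := by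
  have decay : (fun j : ℕ => Real.exp (-(1 - c) * (j : ℝ) ^ ε)) =o[atTop]
      fun j => ((j : ℝ) ^ ε) ^ (b / ε) :=
    (isLittleO_exp_neg_mul_rpow_atTop (sub_pos.2 hc) _).comp_tendsto (tendsto_natCast_rpow_atTop hε)
  refine (decay.mul_isBigO (isBigO_refl (fun j : ℕ => Real.exp ((j : ℝ) ^ ε)) atTop)).congr
    (fun j => ?_) (fun j => ?_)
  · rw [← Real.exp_add]
    ring_nf
  · rw [← Real.rpow_mul (by positivity), mul_div_cancel₀ _ hε.ne']

lemma isBigO_testPoint_succ (hε₀ : 0 ≤ ε) (hε₁ : ε ≤ 1) :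
    (fun j => (testPoint ε (j + 1) : ℝ)) =O[atTop] fun j => Real.exp ((j : ℝ) ^ ε) := by
  refine .of_bound (Real.exp 1) ?_
  filter_upwards [eventually_succ_rpow_le_rpow_add_one hε₀ hε₁] with j hj
  rw [Real.norm_of_nonneg (by positivity), Real.norm_of_nonneg (by positivity), ← Real.exp_add,
    add_comm (1 : ℝ)]
  exact (testPoint_le_exp ε _).trans (Real.exp_le_exp.2 hj)

lemma isBigO_testPoint_succ_sub (hε₀ : 0 < ε) (hε₁ : ε < 1) {s : ℝ} (hs₀ : 0 ≤ s) (hs₁ : s < 1) :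
    (fun j => (testPoint ε (j + 1) : ℝ) - testPoint ε j + (testPoint ε (j + 1) : ℝ) ^ s) =O[atTop]
      fun j => (j : ℝ) ^ (ε - 1) * Real.exp ((j : ℝ) ^ ε) := by
  have one_isBigO : (fun _ : ℕ => (1 : ℝ)) =O[atTop]
      fun j => (j : ℝ) ^ (ε - 1) * Real.exp ((j : ℝ) ^ ε) := by
    simpa using (isLittleO_exp_mul_rpow hε₀ zero_lt_one (ε - 1)).isBigO
  have rpow_isBigO : (fun j => (testPoint ε (j + 1) : ℝ) ^ s) =O[atTop]
      fun j => (j : ℝ) ^ (ε - 1) * Real.exp ((j : ℝ) ^ ε) := by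
    refine ((isBigO_testPoint_succ hε₀.le hε₁.le).rpow hs₀
      (.of_forall fun _ => Real.exp_nonneg _)).trans ?_
    simpa only [← Real.exp_mul, mul_comm _ s] using
      (isLittleO_exp_mul_rpow hε₀ hs₁ (ε - 1)).isBigO
  refine IsBigO.add (.trans (.of_bound' (.of_forall fun j => ?_))
    ((isBigO_exp_succ_rpow_sub hε₀.le hε₁).add one_isBigO)) rpow_isBigO
  have sub_nonneg : (0 : ℝ) ≤ testPoint ε (j + 1) - testPoint ε j :=
    sub_nonneg.2 (mod_cast monotone_testPoint hε₀ j.le_succ)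
  rw [Real.norm_of_nonneg sub_nonneg]
  refine le_trans ?_ (le_abs_self _)
  linarith [testPoint_le_exp ε (j + 1), Nat.sub_one_lt_floor (Real.exp ((j : ℝ) ^ ε)),
    show (testPoint ε j : ℝ) = ⌊Real.exp ((j : ℝ) ^ ε)⌋₊ from rfl]

lemma one_isBigO_natCast_rpow (hε : 0 ≤ ε) :
    (fun _ : ℕ => (1 : ℝ)) =O[atTop] fun j => (j : ℝ) ^ ε := by
  refine .of_bound' ?_
  filter_upwards [eventually_ge_atTop 1] with j hj
  rw [norm_one, Real.norm_of_nonneg (by positivity)]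
  exact Real.one_le_rpow (mod_cast hj) hε

lemma isBigO_log_testPoint_succ (hε₀ : 0 ≤ ε) (hε₁ : ε ≤ 1) :
    (fun j => Real.log (testPoint ε (j + 1))) =O[atTop] fun j => (j : ℝ) ^ ε := by
  refine .trans (.of_bound' ?_) ((isBigO_refl _ _).add (one_isBigO_natCast_rpow hε₀))
  filter_upwards [eventually_succ_rpow_le_rpow_add_one hε₀ hε₁] with j hj
  have hpos := one_le_testPoint ε (j + 1)
  rw [Real.norm_of_nonneg (Real.log_natCast_nonneg _), Real.norm_of_nonneg (by positivity)]
  refine le_trans ?_ hj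
  exact (Real.log_le_iff_le_exp (mod_cast hpos)).2 (testPoint_le_exp ε _)

lemma isBigO_clog_testPoint_succ (hε₀ : 0 ≤ ε) (hε₁ : ε ≤ 1) :
    (fun j => (Nat.clog 2 (testPoint ε (j + 1)) : ℝ)) =O[atTop] fun j => (j : ℝ) ^ ε := by
  refine .trans (.of_bound' (.of_forall fun j => ?_))
    (((isBigO_log_testPoint_succ hε₀ hε₁).const_mul_left (Real.log 2)⁻¹).add
      (one_isBigO_natCast_rpow hε₀))
  have logb_nonneg : 0 ≤ Real.logb 2 (testPoint ε (j + 1)) :=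
    Real.logb_nonneg one_lt_two (mod_cast one_le_testPoint ε _)
  have clog_le : (Nat.clog 2 (testPoint ε (j + 1)) : ℝ) ≤
      Real.logb 2 (testPoint ε (j + 1)) + 1 := by
    rw [← Real.natCeil_logb_natCast, Nat.cast_ofNat]
    exact (Nat.ceil_lt_add_one logb_nonneg).le
  rw [Real.norm_of_nonneg (by positivity), inv_mul_eq_div]
  exact clog_le.trans (le_abs_self _)

lemma isBigO_sum_divisorCount_testPoint (hε₀ : 0 < ε) (hε₁ : ε < 1) (k : ℕ) :
    (fun j => ∑ n ∈ Finset.Ioc (testPoint ε j) (testPoint ε (j + 1)), (divisorCount (k + 1) n : ℝ))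
      =O[atTop] fun j : ℕ => (j : ℝ) ^ (ε - 1) * Real.exp ((j : ℝ) ^ ε) * ((j : ℝ) ^ ε) ^ k := by
  have hk : (k : ℝ) / (k + 1) < 1 := by rw [div_lt_one (by positivity)]; linarith
  refine .trans (.of_bound' (.of_forall fun j => ?_))
    (((isBigO_testPoint_succ_sub hε₀ hε₁ (by positivity) hk).const_mul_left (k + 1)).mul
      (((one_isBigO_natCast_rpow hε₀.le).add (isBigO_log_testPoint_succ hε₀.le hε₁.le)).pow k))
  rw [Real.norm_of_nonneg (by positivity)]
  exact (sum_divisorCount_Ioc_le (monotone_testPoint hε₀ j.le_succ) k).trans (le_abs_self _)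

lemma isBigO_increment_bound (hε₀ : 0 < ε) (hε₁ : ε < 1) (c : ℝ) :
    (fun j => 2 * (((Nat.clog 2 (testPoint ε (j + 1)) : ℝ) + 1) ^ 5 *
      (∑ n ∈ Finset.Ioc (testPoint ε j) (testPoint ε (j + 1)), (divisorCount 3 n : ℝ)) ^ 2 /
        (c * √(testPoint ε j) / 2) ^ 4)) =O[atTop] fun j : ℕ => (j : ℝ) ^ (11 * ε - 2) := by
  have clog_isBigO := (isBigO_clog_testPoint_succ hε₀.le hε₁.le).add
    (one_isBigO_natCast_rpow hε₀.le)
  have sum_isBigO := isBigO_sum_divisorCount_testPoint hε₀ hε₁ 2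
  have inv_isBigO := (isEquivalent_testPoint hε₀).inv.isBigO
  refine ((((clog_isBigO.pow 5).mul (sum_isBigO.pow 2)).mul (inv_isBigO.pow 2)).const_mul_left
    (2 * ((c / 2) ^ 4)⁻¹)).congr' (.of_forall fun j => ?_) ?_
  · have denominator_eq : (c * √(testPoint ε j) / 2) ^ 4 =
        (c / 2) ^ 4 * (testPoint ε j : ℝ) ^ 2 := by
      rw [mul_div_right_comm, mul_pow, show 4 = 2 * 2 from rfl, pow_mul (√_),
        Real.sq_sqrt (by positivity)]
    simp only [Pi.inv_apply, inv_pow, denominator_eq]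
    ring
  · filter_upwards [eventually_gt_atTop 0] with j hj
    have hj' : (0 : ℝ) < j := mod_cast hj
    rw [Pi.inv_apply, Real.rpow_sub_one hj'.ne', Real.rpow_sub hj', mul_comm 11 ε,
      Real.rpow_mul hj'.le, Real.rpow_ofNat, Real.rpow_ofNat]
    field_simp

end TestPoints

section LargeIncrements

open Filter Asymptotics

variable {Ω : Type*} [MeasurableSpace Ω] {μ : Measure Ω} [IsProbabilityMeasure μ]
  {f : Ω → ℕ → ℝ} {ε : ℝ}

lemma IsRademacherRMF.exists_measure_increment_le (hf : IsRademacherRMF μ f) (g : ℕ → ℕ)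
    (hε₀ : 0 < ε) (hε₁ : ε < 1) {c : ℝ} (hc : 0 < c) :
    ∃ C > 0, ∀ᶠ j in atTop,
      μ {ω | ∃ x : ℝ, testPoint ε j < x ∧ x ≤ testPoint ε (j + 1) ∧
        c * √(testPoint ε j) < |∑ n ∈ Finset.Ioc (testPoint ε j) ⌊x⌋₊ with √x < g n, f ω n|} ≤
      ENNReal.ofReal (C * (j : ℝ) ^ (11 * ε - 2)) := by
  obtain ⟨C, hC, hbound⟩ := (isBigO_increment_bound hε₀ hε₁ c).exists_pos
  refine ⟨C, hC, hbound.bound.mono fun j hj => ?_⟩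
  have testPoint_pos : (0 : ℝ) < testPoint ε j := mod_cast one_le_testPoint ε j
  refine (hf.measure_exists_lt_abs_sum_sqrt_lt_le g (Nat.le_pow_clog one_lt_two _)
    (by positivity)).trans (ENNReal.ofReal_le_ofReal ?_)
  rw [Real.norm_of_nonneg (r := (j : ℝ) ^ _) (by positivity)] at hj
  exact (le_abs_self _).trans hj

lemma rpow_le_log_rpow_mul_rpow {X a b : ℝ} {j : ℕ} (hε : 0 < ε) (ha : 0 ≤ a) (hX : 1 < X)
    (hj : X < testPoint ε j) :
    (j : ℝ) ^ b ≤ Real.log X ^ (-(a / ε)) * (j : ℝ) ^ (b + a) := by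
  have log_lt : Real.log X < (j : ℝ) ^ ε :=
    (Real.log_lt_iff_lt_exp (by positivity)).2 (hj.trans_le (testPoint_le_exp ε j))
  have hj_pos : (0 : ℝ) < j := by
    refine Nat.cast_pos.2 (Nat.pos_of_ne_zero ?_)
    rintro rfl
    rw [Nat.cast_zero, Real.zero_rpow hε.ne'] at log_lt
    exact log_lt.not_gt (Real.log_pos hX)
  calc (j : ℝ) ^ b = ((j : ℝ) ^ ε) ^ (-(a / ε)) * (j : ℝ) ^ (b + a) := by
        rw [← Real.rpow_mul hj_pos.le, ← Real.rpow_add hj_pos]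
        congr 1
        field_simp
        ring
    _ ≤ Real.log X ^ (-(a / ε)) * (j : ℝ) ^ (b + a) := by
        gcongr ?_ * _
        exact Real.rpow_le_rpow_of_nonpos (Real.log_pos hX) log_lt.le
          (neg_nonpos.2 (by positivity))

theorem IsRademacherRMF.exists_measure_exists_increment_le (hf : IsRademacherRMF μ f)
    (g : ℕ → ℕ) (hε : 0 < ε) {a : ℝ} (ha : 0 ≤ a) (haε : a + 11 * ε < 1) {c : ℝ} (hc : 0 < c) :
    ∃ C > 0, ∀ᶠ X : ℝ in atTop,
      μ {ω | ∃ j, X < testPoint ε j ∧ ∃ x : ℝ, testPoint ε j < x ∧ x ≤ testPoint ε (j + 1) ∧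
        c * √(testPoint ε j) < |∑ n ∈ Finset.Ioc (testPoint ε j) ⌊x⌋₊ with √x < g n, f ω n|} ≤
      ENNReal.ofReal (C * Real.log X ^ (-(a / ε))) := by
  obtain ⟨C, hC, hbound⟩ := hf.exists_measure_increment_le g hε (by linarith) hc
  obtain ⟨J, hJ⟩ := eventually_atTop.1 hbound
  have summable : Summable fun j : ℕ => (j : ℝ) ^ (11 * ε - 2 + a) :=
    Real.summable_nat_rpow.2 (by linarith)
  set S := ∑' j : ℕ, (j : ℝ) ^ (11 * ε - 2 + a)
  have : 0 ≤ S := tsum_nonneg fun j => by positivity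
  refine ⟨C * (S + 1), by positivity, ?_⟩
  filter_upwards [eventually_gt_atTop 1, eventually_ge_atTop (testPoint ε J : ℝ)] with X hX hXJ
  set increment : ℕ → Set Ω := fun j =>
    {ω | X < testPoint ε j ∧ ∃ x : ℝ, testPoint ε j < x ∧ x ≤ testPoint ε (j + 1) ∧
      c * √(testPoint ε j) < |∑ n ∈ Finset.Ioc (testPoint ε j) ⌊x⌋₊ with √x < g n, f ω n|}
  have log_pos := Real.log_pos hX
  have measure_increment_le (j : ℕ) : μ (increment j) ≤
      ENNReal.ofReal (C * Real.log X ^ (-(a / ε)) * (j : ℝ) ^ (11 * ε - 2 + a)) := by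
    by_cases hj : X < testPoint ε j
    · have J_le : J ≤ j := (monotone_testPoint hε).reflect_lt (mod_cast hXJ.trans_lt hj) |>.le
      refine (measure_mono fun ω hω => hω.2).trans ((hJ j J_le).trans ?_)
      rw [mul_assoc]
      gcongr
      exact rpow_le_log_rpow_mul_rpow hε ha hX hj
    · simp [increment, hj]
  calc _ ≤ μ (⋃ j, increment j) := measure_mono fun _ => Set.mem_iUnion.2
    _ ≤ ∑' j : ℕ, ENNReal.ofReal (C * Real.log X ^ (-(a / ε)) * (j : ℝ) ^ (11 * ε - 2 + a)) :=
        (measure_iUnion_le _).trans (ENNReal.tsum_le_tsum measure_increment_le)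
    _ = ENNReal.ofReal (C * Real.log X ^ (-(a / ε)) * S) := by
        rw [← ENNReal.ofReal_tsum_of_nonneg (fun j => by positivity) (summable.mul_left _),
          tsum_mul_left]
    _ ≤ ENNReal.ofReal (C * (S + 1) * Real.log X ^ (-(a / ε))) := by
        rw [mul_right_comm]
        gcongr
        linarith

lemma one_le_Rbd (hε : 0 ≤ ε) {x : ℝ} (hx : Real.exp (Real.exp 1) ≤ x) : 1 ≤ Rbd ε x := by
  have exp_one_le : Real.exp 1 ≤ Real.log x :=
    (Real.le_log_iff_exp_le ((Real.exp_pos _).trans_le hx)).2 hx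
  exact Real.one_le_rpow
    ((Real.le_log_iff_exp_le ((Real.exp_pos _).trans_le exp_one_le)).2 exp_one_le) (by positivity)

lemma tendsto_Xpt_atTop (hε : 0 < ε) : Tendsto (Xpt ε) atTop atTop :=
  Real.tendsto_exp_atTop.comp <| (tendsto_rpow_atTop_of_base_gt_one 2 one_lt_two).comp <|
    tendsto_rpow_atTop (by positivity)

lemma log_Xpt_rpow (ε ℓ s : ℝ) :
    Real.log (Xpt ε ℓ) ^ s = 2 ^ (ℓ ^ (1 / (4 * ε)) * s) := by
  rw [Xpt, Real.log_exp, ← Real.rpow_mul zero_le_two]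

end LargeIncrements

theorem event_D_rademacher_general {Ω : Type*} [MeasurableSpace Ω] (μ : Measure Ω)
    [IsProbabilityMeasure μ] (f : Ω → ℕ → ℝ) (hf : IsRademacherRMF μ f) {ε a : ℝ} (hε : 0 < ε)
    (ha : 0 ≤ a) (haε : a + 11 * ε < 1) :
    ∃ C : ℝ, 0 < C ∧ ∃ L : ℕ, ∀ ℓ : ℕ, L ≤ ℓ →
      μ {ω | ∃ i : ℕ, 2 ≤ i ∧
            Xpt ε ((ℓ : ℝ) - 1) < (testPoint ε (i - 1) : ℝ) ∧
            (testPoint ε (i - 1) : ℝ) ≤ Xpt ε (ℓ : ℝ) ∧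
            ∃ x : ℝ, (testPoint ε (i - 1) : ℝ) < x ∧ x ≤ (testPoint ε i : ℝ) ∧
              2 * (Real.sqrt (testPoint ε (i - 1)) * Rbd ε (testPoint ε (i - 1))) <
                |∑ n ∈ (Finset.Ioc (testPoint ε (i - 1)) ⌊x⌋₊).filter
                    (fun n : ℕ => Real.sqrt x < (Pfac n : ℝ)), f ω n|} ≤
        ENNReal.ofReal (C * (2 : ℝ) ^ (-(((ℓ : ℝ) - 1) ^ (1 / (4 * ε)) * a / ε))) := by
  obtain ⟨C, hC, hbound⟩ := hf.exists_measure_exists_increment_le Pfac hε ha haε two_pos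
  have tendsto_Xpt_pred : Filter.Tendsto (fun ℓ : ℕ => Xpt ε ((ℓ : ℝ) - 1)) .atTop .atTop :=
    (tendsto_Xpt_atTop hε).comp <|
      Filter.tendsto_atTop_add_const_right _ (-1) tendsto_natCast_atTop_atTop
  obtain ⟨L, hL⟩ := Filter.eventually_atTop.1 <| tendsto_Xpt_pred.eventually <|
    hbound.and (Filter.eventually_ge_atTop (Real.exp (Real.exp 1)))
  refine ⟨C, hC, L, fun ℓ hℓ => ?_⟩
  obtain ⟨hmeasure, hX⟩ := hL ℓ hℓ
  rw [mul_div_assoc, ← mul_neg, ← log_Xpt_rpow]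
  refine (measure_mono ?_).trans hmeasure
  rintro ω ⟨i, hi, hXi, -, x, hx, hxi, hlt⟩
  refine ⟨i - 1, hXi, x, hx, by rwa [Nat.sub_add_cancel (by omega)], lt_of_le_of_lt ?_ hlt⟩
  gcongr
  exact le_mul_of_one_le_right (Real.sqrt_nonneg _) (one_le_Rbd hε.le (hX.trans hXi.le))

/-- For `ε > 0` sufficiently small and sufficiently large `ℓ`,
`ℙ(𝓓_ℓ) ≪_ε 2^{-(ℓ-1)^K (1/3 - 68ε/3)/ε}`. -/
theorem event_D_rademacher
    {Ω : Type*} [MeasurableSpace Ω] (μ : Measure Ω) [IsProbabilityMeasure μ]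
    (f : Ω → ℕ → ℝ) (hf : IsRademacherRMF μ f) :
    ∃ ε₀ : ℝ, 0 < ε₀ ∧ ∀ ε : ℝ, 0 < ε → ε < ε₀ →
      ∃ C : ℝ, 0 < C ∧ ∃ L : ℕ, ∀ ℓ : ℕ, L ≤ ℓ → 2 ≤ ℓ →
        μ {ω | ∃ i : ℕ, 2 ≤ i ∧
              Xpt ε ((ℓ : ℝ) - 1) < (testPoint ε (i - 1) : ℝ) ∧
              (testPoint ε (i - 1) : ℝ) ≤ Xpt ε (ℓ : ℝ) ∧
              ∃ x : ℝ, (testPoint ε (i - 1) : ℝ) < x ∧ x ≤ (testPoint ε i : ℝ) ∧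
                2 * (Real.sqrt (testPoint ε (i - 1)) * Rbd ε (testPoint ε (i - 1))) <
                  |∑ n ∈ (Finset.Ioc (testPoint ε (i - 1)) ⌊x⌋₊).filter
                      (fun n : ℕ => Real.sqrt x < (Pfac n : ℝ)), f ω n|} ≤
          ENNReal.ofReal (C *
            (2 : ℝ) ^ (-(((ℓ : ℝ) - 1) ^ (1 / (4 * ε)) *
              (1 / 3 - 68 * ε / 3) / ε))) := by
  refine ⟨1 / 68, by norm_num, fun ε hε hε' => ?_⟩
  obtain ⟨C, hC, L, hL⟩ := event_D_rademacher_general μ f hf hε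
    (a := 1 / 3 - 68 * ε / 3) (by linarith) (by linarith)
  exact ⟨C, hC, L, fun ℓ hℓ _ => hL ℓ hℓ⟩
end
end

section
/- Let f be a Rademacher random multiplicative function, let x ≥ 4, and set 𝓕(√x) := σ({f(p) : p prime, p ≤ √x}), M_f(x) := ∑_{n ≤ x, P(n) > √x} f(n), and V(x) := ∑_{√x < p ≤ x, p prime} (∑_{m ≤ x/p} f(m))². Then for any λ > 0, almost surely the conditional probability satisfies ℙ(|M_f(x)| ≥ λ | 𝓕(√x)) ≤ 2·exp(−λ²/(2·V(x))), where on the event {V(x) = 0} the left-hand side vanishes. -/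
open MeasureTheory ProbabilityTheory

noncomputable section

/-- The σ-algebra `𝓕(√x)` generated by `{f(p) : p prime, p ≤ √x}`. -/
def sigmaAlgSqrt {Ω : Type*} (f : Ω → ℕ → ℝ) (x : ℝ) : MeasurableSpace Ω :=
  ⨆ p ∈ {p : ℕ | p.Prime ∧ (p : ℝ) ≤ Real.sqrt x},
    MeasurableSpace.comap (fun ω => f ω p) (inferInstance : MeasurableSpace ℝ)

/-- `M_f(x) := ∑_{n ≤ x, P(n) > √x} f(n)`. -/
def Mrad {Ω : Type*} (f : Ω → ℕ → ℝ) (ω : Ω) (x : ℝ) : ℝ :=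
  ∑ n ∈ (Finset.Icc 1 ⌊x⌋₊).filter (fun n : ℕ => Real.sqrt x < (Pfac n : ℝ)), f ω n

/-- `V(x) := ∑_{√x < p ≤ x} (∑_{m ≤ x/p} f(m))²`. -/
def Vrad {Ω : Type*} (f : Ω → ℕ → ℝ) (ω : Ω) (x : ℝ) : ℝ :=
  ∑ p ∈ (Finset.Icc 1 ⌊x⌋₊).filter (fun p : ℕ => Nat.Prime p ∧ Real.sqrt x < (p : ℝ)),
    (∑ m ∈ Finset.Icc 1 ⌊x / (p : ℝ)⌋₊, f ω m) ^ 2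

/-!
For a prime `p > √x`, every `n ≤ x` with `P(n) = p` is `p * m` with `m ≤ x / p < p`, so
`M_f(x) = ∑ p, f(p) * S_p` over the primes of `(√x, x]`, where `S_p = ∑_{m ≤ x / p} f(m)`. Since
`x / p ≤ √x`, each `S_p` is `𝓕(√x)`-measurable, whereas the signs `f(p)` are independent of
`𝓕(√x)`. Conditioning therefore freezes the coefficients `S_p` and leaves a sum of independent
sub-Gaussian variables with variance proxy `∑ p, S_p ^ 2 = V(x)`; Hoeffding's inequality applies,
and when `V(x) = 0` the frozen sum vanishes almost surely.
-/

section Freezing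

variable {Ω β γ E : Type*} {m mΩ : MeasurableSpace Ω} {mβ : MeasurableSpace β}
  {mγ : MeasurableSpace γ} {μ : Measure Ω} [NormedAddCommGroup E]
  {A : Ω → β} {X : Ω → γ} {g : β × γ → E}

lemma integrable_map_prod_of_indepFun [IsFiniteMeasure μ] (hA : Measurable A) (hX : Measurable X)
    (hAX : IndepFun A X μ) (hg : StronglyMeasurable g)
    (hint : Integrable (fun ω => g (A ω, X ω)) μ) :
    Integrable g ((μ.map A).prod (μ.map X)) := by
  rw [← hAX.map_prod_eq_prod_map_map hA.aemeasurable hX.aemeasurable]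
  exact (integrable_map_measure hg.aestronglyMeasurable (hA.prodMk hX).aemeasurable).2 hint

variable [NormedSpace ℝ E]

lemma integral_eq_integral_integral_of_indepFun [IsFiniteMeasure μ] (hA : Measurable A)
    (hX : Measurable X) (hAX : IndepFun A X μ) (hg : StronglyMeasurable g)
    (hint : Integrable (fun ω => g (A ω, X ω)) μ) :
    ∫ ω, g (A ω, X ω) ∂μ = ∫ ω, ∫ ω', g (A ω, X ω') ∂μ ∂μ := by
  calc ∫ ω, g (A ω, X ω) ∂μ
      = ∫ z, g z ∂(μ.map A).prod (μ.map X) := by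
        rw [← hAX.map_prod_eq_prod_map_map hA.aemeasurable hX.aemeasurable,
          integral_map (hA.prodMk hX).aemeasurable hg.aestronglyMeasurable]
    _ = ∫ ω, ∫ x, g (A ω, x) ∂μ.map X ∂μ := by
        rw [integral_prod _ (integrable_map_prod_of_indepFun hA hX hAX hg hint),
          integral_map hA.aemeasurable hg.integral_prod_right'.aestronglyMeasurable]
    _ = ∫ ω, ∫ ω', g (A ω, X ω') ∂μ ∂μ := by
        congr with ω
        exact integral_map hX.aemeasurable
          (hg.comp_measurable measurable_prodMk_left).aestronglyMeasurable

lemma setIntegral_eq_setIntegral_integral_of_indep [IsFiniteMeasure μ] (hm : m ≤ mΩ)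
    (hA : Measurable[m] A) (hX : Measurable X) (hmX : Indep m (mγ.comap X) μ)
    (hg : StronglyMeasurable g) (hint : Integrable (fun ω => g (A ω, X ω)) μ)
    {s : Set Ω} (hs : MeasurableSet[m] s) :
    ∫ ω in s, g (A ω, X ω) ∂μ = ∫ ω in s, ∫ ω', g (A ω, X ω') ∂μ ∂μ := by
  have hs' : MeasurableSet s := hm s hs
  have hind (F : Ω → E) : (fun ω => s.indicator (1 : Ω → ℝ) ω • F ω) = s.indicator F := by
    ext ω
    by_cases hω : ω ∈ s <;> simp [hω]
  -- Carrying the indicator of `s` along with `A` turns the set integrals into full integrals.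
  have hWm : Measurable[m] fun ω => (s.indicator (1 : Ω → ℝ) ω, A ω) :=
    (measurable_const.indicator hs).prodMk hA
  have hWX : IndepFun (fun ω => (s.indicator (1 : Ω → ℝ) ω, A ω)) X μ :=
    (IndepFun_iff_Indep _ _ _).2 (indep_of_indep_of_le_left hmX hWm.comap_le)
  have hfubini := integral_eq_integral_integral_of_indepFun
    (g := fun z => z.1.1 • g (z.1.2, z.2)) (hWm.mono hm le_rfl) hX hWX (by fun_prop)
    (by simpa only [hind] using hint.indicator hs')
  simpa only [integral_smul, hind, integral_indicator hs'] using hfubini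

theorem condExp_ae_eq_integral_of_indep [IsFiniteMeasure μ] [CompleteSpace E] (hm : m ≤ mΩ)
    (hA : Measurable[m] A) (hX : Measurable X) (hmX : Indep m (mγ.comap X) μ)
    (hg : StronglyMeasurable g) (hint : Integrable (fun ω => g (A ω, X ω)) μ) :
    μ[fun ω => g (A ω, X ω) | m] =ᵐ[μ] fun ω => ∫ ω', g (A ω, X ω') ∂μ := by
  have hA' : Measurable A := hA.mono hm le_rfl
  have hAX : IndepFun A X μ :=
    (IndepFun_iff_Indep _ _ _).2 (indep_of_indep_of_le_left hmX hA.comap_le)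
  have hlaw (ω : Ω) : ∫ ω', g (A ω, X ω') ∂μ = ∫ x, g (A ω, x) ∂μ.map X :=
    (integral_map hX.aemeasurable
      (hg.comp_measurable measurable_prodMk_left).aestronglyMeasurable).symm
  refine (ae_eq_condExp_of_forall_setIntegral_eq hm hint (fun s _ _ => ?_) (fun s hs _ =>
    (setIntegral_eq_setIntegral_integral_of_indep hm hA hX hmX hg hint hs).symm) ?_).symm
  · simp only [hlaw]
    exact ((integrable_map_prod_of_indepFun hA' hX hAX hg hint).integral_prod_left.comp_measurable
      hA').integrableOn
  · simp only [hlaw]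
    exact (hg.integral_prod_right'.comp_measurable hA).aestronglyMeasurable

theorem condExp_indicator_ae_eq_measureReal_of_indep [IsFiniteMeasure μ] (hm : m ≤ mΩ)
    (hA : Measurable[m] A) (hX : Measurable X) (hmX : Indep m (mγ.comap X) μ)
    {S : Set (β × γ)} (hS : MeasurableSet S) :
    μ[{ω | (A ω, X ω) ∈ S}.indicator (fun _ => (1 : ℝ)) | m] =ᵐ[μ]
      fun ω => μ.real {ω' | (A ω, X ω') ∈ S} := by
  have hSpre {B : Ω → β} (hB : Measurable B) : MeasurableSet {ω | (B ω, X ω) ∈ S} :=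
    hB.prodMk hX hS
  have h := condExp_ae_eq_integral_of_indep hm hA hX hmX
    (stronglyMeasurable_const.indicator hS : StronglyMeasurable (S.indicator fun _ => (1 : ℝ)))
    ((integrable_const 1).indicator (hSpre (hA.mono hm le_rfl)))
  filter_upwards [h] with ω hω
  exact hω.trans ((integral_indicator_const 1 (hSpre measurable_const)).trans (mul_one _))

end Freezing

section Hoeffding

variable {Ω : Type*} {m mΩ : MeasurableSpace Ω} {μ : Measure Ω}

lemma hasSubgaussianMGF_one_of_measure_eq_half [IsProbabilityMeasure μ] {X : Ω → ℝ}
    (hX : Measurable X) (hpos : μ {ω | X ω = 1} = 1 / 2) (hneg : μ {ω | X ω = -1} = 1 / 2) :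
    HasSubgaussianMGF X 1 μ := by
  have hposm : MeasurableSet {ω | X ω = 1} := hX (measurableSet_singleton 1)
  have hnegm : MeasurableSet {ω | X ω = -1} := hX (measurableSet_singleton (-1))
  have hdisj : Disjoint {ω | X ω = 1} {ω | X ω = -1} :=
    Set.disjoint_left.2 fun ω (h₁ : X ω = 1) (h₂ : X ω = -1) => by linarith
  have hsign : ∀ᵐ ω ∂μ, X ω = 1 ∨ X ω = -1 := by
    refine (prob_compl_eq_zero_iff (hposm.union hnegm)).2 ?_
    rw [measure_union hdisj hnegm, hpos, hneg, ENNReal.add_halves]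
  have hmean : μ[X] = 0 := by
    have hX_eq : X =ᵐ[μ] {ω | X ω = 1}.indicator 1 - {ω | X ω = -1}.indicator 1 := by
      filter_upwards [hsign] with ω hω
      rcases hω with h | h <;> norm_num [Set.indicator, h]
    rw [integral_congr_ae hX_eq, integral_sub' ((integrable_const 1).indicator hposm)
      ((integrable_const 1).indicator hnegm), integral_indicator_one hposm,
      integral_indicator_one hnegm, measureReal_def, measureReal_def, hpos, hneg, sub_self]
  have hIcc : ∀ᵐ ω ∂μ, X ω ∈ Set.Icc (-1) 1 := by
    filter_upwards [hsign] with ω hω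
    rcases hω with h | h <;> simp [h]
  convert hasSubgaussianMGF_of_mem_Icc_of_integral_eq_zero hX.aemeasurable hIcc hmean
  ext
  norm_num

lemma measureReal_abs_ge_le_of_hasSubgaussianMGF [IsFiniteMeasure μ] {Z : Ω → ℝ} {c : NNReal}
    (hZ : HasSubgaussianMGF Z c μ) {ε : ℝ} (hε : 0 ≤ ε) :
    μ.real {ω | ε ≤ |Z ω|} ≤ 2 * Real.exp (-ε ^ 2 / (2 * c)) := by
  have hunion : {ω | ε ≤ |Z ω|} = {ω | ε ≤ Z ω} ∪ {ω | ε ≤ (-Z) ω} := by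
    ext ω
    exact le_abs (a := ε) (b := Z ω)
  calc μ.real {ω | ε ≤ |Z ω|} ≤ μ.real {ω | ε ≤ Z ω} + μ.real {ω | ε ≤ (-Z) ω} :=
        hunion ▸ measureReal_union_le _ _
    _ ≤ 2 * Real.exp (-ε ^ 2 / (2 * c)) := by
        linarith [hZ.measure_ge_le hε, hZ.neg.measure_ge_le hε]

lemma measureReal_abs_ge_eq_zero_of_hasSubgaussianMGF_zero {Z : Ω → ℝ}
    (hZ : HasSubgaussianMGF Z 0 μ) {ε : ℝ} (hε : 0 < ε) : μ.real {ω | ε ≤ |Z ω|} = 0 := by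
  have hnull : ∀ᵐ ω ∂μ, ¬ε ≤ |Z ω| := by
    filter_upwards [hZ.ae_eq_zero_of_hasSubgaussianMGF_zero] with ω hω
    simpa [hω] using hε
  simpa [measureReal_def, ae_iff] using congrArg ENNReal.toReal (ae_iff.1 hnull)

theorem condExp_abs_sum_ge_le {ι : Type*} [Fintype ι] [IsProbabilityMeasure μ] (hm : m ≤ mΩ)
    {a X : ι → Ω → ℝ} {c : ι → NNReal}
    (ha : ∀ i, Measurable[m] (a i)) (hX : ∀ i, Measurable (X i)) (hindep : iIndepFun X μ)
    (hmX : Indep m (⨆ i, MeasurableSpace.comap (X i) inferInstance) μ)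
    (hsubG : ∀ i, HasSubgaussianMGF (X i) (c i) μ) {ε : ℝ} (hε : 0 < ε) :
    ∀ᵐ ω ∂μ,
      (μ[{ω' | ε ≤ |∑ i, a i ω' * X i ω'|}.indicator (fun _ => (1 : ℝ)) | m]) ω ≤
        2 * Real.exp (-ε ^ 2 / (2 * ∑ i, a i ω ^ 2 * c i)) ∧
      (∑ i, a i ω ^ 2 * c i = 0 →
        (μ[{ω' | ε ≤ |∑ i, a i ω' * X i ω'|}.indicator (fun _ => (1 : ℝ)) | m]) ω = 0) := by
  have hS : MeasurableSet {z : (ι → ℝ) × (ι → ℝ) | ε ≤ |∑ i, z.1 i * z.2 i|} :=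
    measurableSet_le measurable_const (by fun_prop)
  have hfreeze := condExp_indicator_ae_eq_measureReal_of_indep (A := fun ω i => a i ω)
    (X := fun ω i => X i ω) hm (@measurable_pi_lambda _ _ _ m _ _ ha) (measurable_pi_lambda _ hX)
    (by rwa [MeasurableSpace.comap_process_pi]) hS
  filter_upwards [hfreeze] with ω hω
  have hsum : HasSubgaussianMGF (fun ω' => ∑ i, a i ω * X i ω')
      (∑ i, ⟨a i ω ^ 2, sq_nonneg _⟩ * c i) μ :=
    HasSubgaussianMGF.sum_of_iIndepFun
      (hindep.comp (fun i y => a i ω * y) fun i => measurable_const_mul _)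
      fun i _ => (hsubG i).const_mul (a i ω)
  have hvar : ((∑ i, ⟨a i ω ^ 2, sq_nonneg _⟩ * c i : NNReal) : ℝ) = ∑ i, a i ω ^ 2 * c i :=
    NNReal.coe_sum _ _
  rw [← hvar, NNReal.coe_eq_zero, hω]
  exact ⟨measureReal_abs_ge_le_of_hasSubgaussianMGF hsum hε.le, fun h0 =>
    measureReal_abs_ge_eq_zero_of_hasSubgaussianMGF_zero (h0 ▸ hsum) hε⟩

end Hoeffding

/-- The primes in the interval `(√x, x]`, over which the sum `V(x)` runs. -/
def largePrimes (x : ℝ) : Finset ℕ :=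
  (Finset.Icc 1 ⌊x⌋₊).filter fun p : ℕ => Nat.Prime p ∧ Real.sqrt x < (p : ℝ)

/-- The partial sum `∑_{m ≤ y} f(m)`; the paper uses it at `y = x / p`. -/
def partialSum {Ω : Type*} (f : Ω → ℕ → ℝ) (ω : Ω) (y : ℝ) : ℝ :=
  ∑ m ∈ Finset.Icc 1 ⌊y⌋₊, f ω m

section LargestPrimeFactor

variable {n p : ℕ} {x : ℝ}

lemma Pfac_prime_and_dvd (hn : 1 < n) : (Pfac n).Prime ∧ Pfac n ∣ n := by
  obtain ⟨q, hq, hqn⟩ :=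
    Finset.exists_mem_eq_sup n.primeFactors (Nat.nonempty_primeFactors.2 hn) id
  rw [Pfac, if_neg hn.not_ge, hqn]
  exact ⟨Nat.prime_of_mem_primeFactors hq, Nat.dvd_of_mem_primeFactors hq⟩

lemma le_Pfac (hp : p.Prime) (hn : n ≠ 0) (hpn : p ∣ n) : p ≤ Pfac n := by
  have hn1 : 1 < n := hp.one_lt.trans_le (Nat.le_of_dvd (Nat.pos_of_ne_zero hn) hpn)
  rw [Pfac, if_neg hn1.not_ge]
  exact Finset.le_sup (f := id) (Nat.mem_primeFactors.2 ⟨hp, hpn, hn⟩)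

lemma Pfac_eq_iff_dvd (hp : p.Prime) (hn : n ≠ 0) (hnp : n < p * p) :
    Pfac n = p ↔ p ∣ n := by
  constructor
  · intro h
    have hn1 : n ≠ 1 := fun hn1 => hp.one_lt.ne (by rw [← h, hn1, Pfac, if_pos le_rfl])
    exact h ▸ (Pfac_prime_and_dvd (by omega)).2
  · intro hpn
    obtain ⟨hq, hqn⟩ := Pfac_prime_and_dvd (hp.one_lt.trans_le (Nat.le_of_dvd (by omega) hpn))
    by_contra hne
    have hmul : p * Pfac n ∣ n :=
      ((Nat.coprime_primes hp hq).2 (Ne.symm hne)).mul_dvd_of_dvd_of_dvd hpn hqn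
    have hle : p * p ≤ n := (Nat.mul_le_mul_left p (le_Pfac hp hn hpn)).trans
      (Nat.le_of_dvd (by omega) hmul)
    omega

lemma mem_largePrimes :
    p ∈ largePrimes x ↔ p.Prime ∧ p ≤ ⌊x⌋₊ ∧ Real.sqrt x < p := by
  rw [largePrimes, Finset.mem_filter, Finset.mem_Icc]
  exact ⟨fun ⟨⟨_, hpx⟩, hp, hsqrt⟩ => ⟨hp, hpx, hsqrt⟩,
    fun ⟨hp, hpx, hsqrt⟩ => ⟨⟨hp.one_le, hpx⟩, hp, hsqrt⟩⟩

lemma floor_lt_mul_self_of_mem_largePrimes (hp : p ∈ largePrimes x) : ⌊x⌋₊ < p * p := by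
  obtain ⟨hp, -, hsqrt⟩ := mem_largePrimes.1 hp
  rw [Nat.floor_lt' (mul_ne_zero hp.ne_zero hp.ne_zero)]
  simpa [sq] using (Real.sqrt_lt' (Nat.cast_pos.2 hp.pos)).1 hsqrt

lemma Pfac_mem_largePrimes (hn : n ∈ Finset.Icc 1 ⌊x⌋₊) (hsqrt : Real.sqrt x < Pfac n) :
    Pfac n ∈ largePrimes x := by
  obtain ⟨hn0, hnx⟩ := Finset.mem_Icc.1 hn
  have hx : 1 ≤ x := Nat.floor_pos.1 (hn0.trans hnx)
  have hn1 : n ≠ 1 := by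
    rintro rfl
    exact hsqrt.not_ge (by simpa [Pfac] using hx)
  obtain ⟨hprime, hdvd⟩ := Pfac_prime_and_dvd (by omega : 1 < n)
  exact mem_largePrimes.2 ⟨hprime, (Nat.le_of_dvd hn0 hdvd).trans hnx, hsqrt⟩

lemma sum_Icc_filter_dvd {M : Type*} [AddCommMonoid M] (F : ℕ → M) (N : ℕ) (hp : 0 < p) :
    ∑ n ∈ Finset.Icc 1 N with p ∣ n, F n = ∑ m ∈ Finset.Icc 1 (N / p), F (p * m) := by
  refine (Finset.sum_nbij (p * ·) (fun m hm => ?_) (fun a _ b _ h => Nat.eq_of_mul_eq_mul_left hp h)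
    (fun n hn => ?_) fun _ _ => rfl).symm
  · rw [Finset.mem_Icc, Nat.le_div_iff_mul_le hp, mul_comm m] at hm
    exact Finset.mem_filter.2 ⟨Finset.mem_Icc.2 ⟨Nat.mul_pos hp hm.1, hm.2⟩, dvd_mul_right p m⟩
  · obtain ⟨hn, m, rfl⟩ := Finset.mem_filter.1 hn
    rw [Finset.mem_Icc, mul_comm p] at hn
    exact ⟨m, Finset.mem_coe.2 (Finset.mem_Icc.2 ⟨Nat.pos_of_mul_pos_right hn.1,
      (Nat.le_div_iff_mul_le hp).2 hn.2⟩), rfl⟩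

lemma filter_Pfac_eq_of_mem_largePrimes (hp : p ∈ largePrimes x) :
    {n ∈ {n ∈ Finset.Icc 1 ⌊x⌋₊ | Real.sqrt x < (Pfac n : ℝ)} | Pfac n = p} =
      {n ∈ Finset.Icc 1 ⌊x⌋₊ | p ∣ n} := by
  obtain ⟨hprime, -, hsqrt⟩ := mem_largePrimes.1 hp
  rw [Finset.filter_filter]
  refine Finset.filter_congr fun n hn => ?_
  obtain ⟨hn0, hnx⟩ := Finset.mem_Icc.1 hn
  rw [← Pfac_eq_iff_dvd hprime (by omega) (hnx.trans_lt (floor_lt_mul_self_of_mem_largePrimes hp))]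
  exact ⟨And.right, fun h => ⟨h ▸ hsqrt, h⟩⟩

end LargestPrimeFactor

namespace IsRademacherRMF

variable {Ω : Type*} [mΩ : MeasurableSpace Ω] {μ : Measure Ω} {f : Ω → ℕ → ℝ} {x : ℝ} {p : ℕ}

lemma map_mul_of_coprime (hf : IsRademacherRMF μ f) (ω : Ω) {a b : ℕ} (hab : a.Coprime b) :
    f ω (a * b) = f ω a * f ω b := by
  by_cases h : Squarefree a ∧ Squarefree b
  · rw [hf.eq_prod_of_squarefree ω _ ((Nat.squarefree_mul hab).2 h),
      hf.eq_prod_of_squarefree ω a h.1, hf.eq_prod_of_squarefree ω b h.2,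
      hab.primeFactors_mul, Finset.prod_union hab.disjoint_primeFactors]
  · rw [hf.eq_zero_of_not_squarefree ω _ ((Nat.squarefree_mul hab).not.2 h)]
    rcases not_and_or.1 h with ha | hb
    · rw [hf.eq_zero_of_not_squarefree ω a ha, zero_mul]
    · rw [hf.eq_zero_of_not_squarefree ω b hb, mul_zero]

lemma sum_Icc_mul_eq_mul_partialSum (hf : IsRademacherRMF μ f) (ω : Ω)
    (hp : p ∈ largePrimes x) :
    ∑ m ∈ Finset.Icc 1 (⌊x⌋₊ / p), f ω (p * m) = f ω p * partialSum f ω (x / p) := by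
  have hprime := (mem_largePrimes.1 hp).1
  rw [partialSum, Nat.floor_div_natCast, Finset.mul_sum]
  refine Finset.sum_congr rfl fun m hm => hf.map_mul_of_coprime ω ?_
  obtain ⟨hm0, hm⟩ := Finset.mem_Icc.1 hm
  have hmp : m < p := hm.trans_lt
    (Nat.div_lt_of_lt_mul (floor_lt_mul_self_of_mem_largePrimes hp))
  exact Nat.coprime_of_lt_prime (by omega) hmp hprime

lemma Mrad_eq_sum_largePrimes (hf : IsRademacherRMF μ f) (ω : Ω) (x : ℝ) :
    Mrad f ω x = ∑ p ∈ largePrimes x, f ω p * partialSum f ω (x / p) := by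
  calc Mrad f ω x
      = ∑ p ∈ largePrimes x,
          ∑ n ∈ {n ∈ Finset.Icc 1 ⌊x⌋₊ | Real.sqrt x < (Pfac n : ℝ)} with Pfac n = p, f ω n :=
        (Finset.sum_fiberwise_of_maps_to (fun n hn =>
          Pfac_mem_largePrimes (Finset.mem_filter.1 hn).1 (Finset.mem_filter.1 hn).2) _).symm
    _ = ∑ p ∈ largePrimes x, f ω p * partialSum f ω (x / p) := by
        refine Finset.sum_congr rfl fun p hp => ?_
        rw [filter_Pfac_eq_of_mem_largePrimes hp,
          sum_Icc_filter_dvd _ _ (mem_largePrimes.1 hp).1.pos,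
          hf.sum_Icc_mul_eq_mul_partialSum ω hp]

lemma measurable_sigmaAlgSqrt_of_le_sqrt (hf : IsRademacherRMF μ f) {m : ℕ}
    (hm : (m : ℝ) ≤ Real.sqrt x) :
    Measurable[sigmaAlgSqrt f x] fun ω => f ω m := by
  by_cases hsq : Squarefree m
  · simp only [fun ω => hf.eq_prod_of_squarefree ω m hsq]
    refine Finset.measurable_prod _ fun q hq => ?_
    have hqm : (q : ℝ) ≤ m := Nat.cast_le.2 (Nat.le_of_mem_primeFactors hq)
    exact measurable_iff_comap_le.2
      (le_iSup₂_of_le q ⟨Nat.prime_of_mem_primeFactors hq, hqm.trans hm⟩ le_rfl)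
  · simp only [fun ω => hf.eq_zero_of_not_squarefree ω m hsq]
    exact measurable_const

lemma measurable_partialSum_div (hf : IsRademacherRMF μ f) (hp : p ∈ largePrimes x) :
    Measurable[sigmaAlgSqrt f x] fun ω => partialSum f ω (x / p) := by
  obtain ⟨hprime, hpx, hsqrt⟩ := mem_largePrimes.1 hp
  have hx : 1 ≤ x := Nat.floor_pos.1 (hprime.pos.trans_le hpx)
  refine Finset.measurable_sum _ fun m hm => hf.measurable_sigmaAlgSqrt_of_le_sqrt ?_
  calc (m : ℝ) ≤ x / p := (Nat.le_floor_iff (by positivity)).1 (Finset.mem_Icc.1 hm).2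
    _ ≤ x / Real.sqrt x := by gcongr
    _ = Real.sqrt x := Real.div_sqrt

lemma indep_sigmaAlgSqrt_largePrimes (hf : IsRademacherRMF μ f) (x : ℝ) :
    Indep (sigmaAlgSqrt f x)
      (⨆ p : largePrimes x, MeasurableSpace.comap (fun ω => f ω p) inferInstance) μ := by
  have hdisj : Disjoint {q : Nat.Primes | ((q : ℕ) : ℝ) ≤ Real.sqrt x}
      {q : Nat.Primes | Real.sqrt x < ((q : ℕ) : ℝ)} :=
    Set.disjoint_left.2 fun q (hle : ((q : ℕ) : ℝ) ≤ Real.sqrt x) => hle.not_gt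
  have hsplit := indep_iSup_of_disjoint (fun q : Nat.Primes => (hf.meas q).comap_le)
    hf.indep.iIndep hdisj
  refine indep_of_indep_of_le_left (indep_of_indep_of_le_right hsplit ?_) ?_
  · refine iSup_le fun ⟨p, hp⟩ => ?_
    obtain ⟨hprime, -, hsqrt⟩ := mem_largePrimes.1 hp
    exact le_iSup₂_of_le (⟨p, hprime⟩ : Nat.Primes) hsqrt le_rfl
  · exact iSup₂_le fun p hp => le_iSup₂_of_le (⟨p, hp.1⟩ : Nat.Primes) hp.2 le_rfl

lemma iIndepFun_largePrimes (hf : IsRademacherRMF μ f) (x : ℝ) :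
    iIndepFun (fun (p : largePrimes x) ω => f ω p) μ :=
  hf.indep.precomp (g := fun p : largePrimes x => (⟨p, (mem_largePrimes.1 p.2).1⟩ : Nat.Primes))
    fun _ _ h => Subtype.ext (Subtype.mk.inj h)

lemma sigmaAlgSqrt_le (hf : IsRademacherRMF μ f) (x : ℝ) : sigmaAlgSqrt f x ≤ mΩ :=
  iSup₂_le fun p _ => (hf.meas p).comap_le

lemma hasSubgaussianMGF [IsProbabilityMeasure μ] (hf : IsRademacherRMF μ f) (hp : p.Prime) :
    HasSubgaussianMGF (fun ω => f ω p) 1 μ :=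
  hasSubgaussianMGF_one_of_measure_eq_half (hf.meas p) (hf.prob_one p hp) (hf.prob_neg_one p hp)

end IsRademacherRMF

/-- Conditional Hoeffding bound: almost surely,
`ℙ(|M_f(x)| ≥ λ | 𝓕(√x)) ≤ 2 exp(-λ²/(2 V(x)))`, and on `{V(x) = 0}` the left-hand
side vanishes. -/
theorem conditional_hoeffding_rademacher
    {Ω : Type*} [MeasurableSpace Ω] (μ : Measure Ω) [IsProbabilityMeasure μ]
    (f : Ω → ℕ → ℝ) (hf : IsRademacherRMF μ f) (x : ℝ) (hx : 4 ≤ x)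
    (lam : ℝ) (hlam : 0 < lam) :
    ∀ᵐ ω ∂μ,
      (μ[Set.indicator {ω' | lam ≤ |Mrad f ω' x|} (fun _ => (1 : ℝ))|sigmaAlgSqrt f x]) ω ≤
          2 * Real.exp (-(lam ^ 2) / (2 * Vrad f ω x)) ∧
      (Vrad f ω x = 0 →
        (μ[Set.indicator {ω' | lam ≤ |Mrad f ω' x|} (fun _ => (1 : ℝ))|sigmaAlgSqrt f x]) ω
          = 0) := by
  have hM (ω : Ω) : Mrad f ω x = ∑ p : largePrimes x, partialSum f ω (x / p) * f ω p := by
    simp only [hf.Mrad_eq_sum_largePrimes, mul_comm (f ω _)]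
    exact (Finset.sum_coe_sort (largePrimes x) _).symm
  have hV (ω : Ω) :
      Vrad f ω x = ∑ p : largePrimes x, partialSum f ω (x / p) ^ 2 * (1 : NNReal) := by
    simp only [NNReal.coe_one, mul_one]
    exact (Finset.sum_coe_sort (largePrimes x) _).symm
  simp only [hM, hV]
  exact condExp_abs_sum_ge_le (a := fun (p : largePrimes x) ω => partialSum f ω (x / p))
    (X := fun p ω => f ω p) (c := fun _ => 1) (hf.sigmaAlgSqrt_le x)
    (fun p => hf.measurable_partialSum_div p.2) (fun p => hf.meas p)
    (hf.iIndepFun_largePrimes x) (hf.indep_sigmaAlgSqrt_largePrimes x)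
    (fun p => hf.hasSubgaussianMGF (mem_largePrimes.1 p.2).1) hlam
end
end
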